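/- Let H₁ and H₂ be finite-dimensional Hilbert spaces and K an invertible matrix on H₁ ⊗ H₂. Let p, q, r, s be real parameters with 1 ≤ p ≤ 2, −1 ≤ q < 0, −1 ≤ r < 0, 1 + q + r > 0, p + q + r > 0, and 1/(p+q+r) ≤ s ≤ 1/(1+q+r). For A positive definite on H₁ ⊗ H₂ and B positive definite on H₂, define Q(A,B) := inf_C Tr[(A^{p/2} K (I₁ ⊗ B^{q/2} C^r B^{q/2}) K† A^{p/2})^s], the infimum taken over all positive definite density matrices C on H₂. Then Q is jointly convex: for all positive definite A₀, A₁ on H₁ ⊗ H₂, all positive definite B₀, B₁ on H₂, and all t ∈ [0,1], Q(t·A₀+(1−t)·A₁, t·B₀+(1−t)·B₁) ≤ t·Q(A₀,B₀) + (1−t)·Q(A₁,B₁). -/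

import Mathlib

open scoped Kronecker ComplexOrder
open Matrix

/-- Real power of a (Hermitian, in practice positive semidefinite) matrix, defined spectrally:
positive eigenvalues are raised to the power `t`, zero (and negative) eigenvalues are sent to `0`. -/
noncomputable def matPow {n : Type*} [Fintype n] [DecidableEq n]
    (M : Matrix n n ℂ) (t : ℝ) : Matrix n n ℂ :=
  if hM : M.IsHermitian then
    (hM.eigenvectorUnitary : Matrix n n ℂ) *
      Matrix.diagonal (fun i =>
        ((if 0 < hM.eigenvalues i then (hM.eigenvalues i) ^ t else 0 : ℝ) : ℂ)) *
      (star (hM.eigenvectorUnitary : Matrix n n ℂ))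
  else 0

/-- Partial trace over the first tensor factor. -/
noncomputable def ptraceFst {m n : Type*} [Fintype m] [Fintype n]
    (M : Matrix (m × n) (m × n) ℂ) : Matrix n n ℂ :=
  Matrix.of fun j j' => ∑ i, M (i, j) (i, j')

/-- Partial trace over the second tensor factor. -/
noncomputable def ptraceSnd {m n : Type*} [Fintype m] [Fintype n]
    (M : Matrix (m × n) (m × n) ℂ) : Matrix m m ℂ :=
  Matrix.of fun i i' => ∑ j, M (i, j) (i', j)

/-- A density matrix: positive semidefinite with unit trace. -/
def IsDensity {n : Type*} [Fintype n] [DecidableEq n] (ρ : Matrix n n ℂ) : Prop :=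
  ρ.PosSemidef ∧ ρ.trace = 1

/-- The optimized trace functional of Statement 2:
`Q(A,B) = inf_C Tr[(A^{p/2} K (I₁ ⊗ B^{q/2} C^r B^{q/2}) K† A^{p/2})^s]`,
the infimum over all positive definite density matrices `C` on `H₂`. -/
noncomputable def Qinf {n₁ n₂ : Type*} [Fintype n₁] [DecidableEq n₁]
    [Fintype n₂] [DecidableEq n₂] (K : Matrix (n₁ × n₂) (n₁ × n₂) ℂ) (p q r s : ℝ)
    (A : Matrix (n₁ × n₂) (n₁ × n₂) ℂ) (B : Matrix n₂ n₂ ℂ) : ℝ :=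
  sInf {x | ∃ C : Matrix n₂ n₂ ℂ, C.PosDef ∧ C.trace = 1 ∧
    x = (Matrix.trace (matPow
      (matPow A (p / 2) * K *
        ((1 : Matrix n₁ n₁ ℂ) ⊗ₖ (matPow B (q / 2) * matPow C r * matPow B (q / 2))) *
        Kᴴ * matPow A (p / 2)) s)).re}

/-!
With `X = Kᴴ A^p K`, `a = -r`, `b = -q` and `E = 1 ⊗ B^{b/2} C^a B^{b/2}`, the trace defining `Q` is
`Tr (X^{1/2} E⁻¹ X^{1/2})^s`. By Hölder and Young it is the supremum over `W > 0` of
`(s/α) Tr (X^{1/2} W X^{1/2})^α - (s/β) Tr (E^{1/2} W E^{1/2})^β`, where `β = 1/(a+b)` and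
`1/α = 1/s + 1/β`. The first term is concave in `W` and, as `1/p ≤ α ≤ 1`, convex in `A`; the
second trace is convex in `W` and concave in `C`, and its supremum over densities `C` is, by a
reverse duality, a concave function of `B`. The minimax theorem exchanges `inf_C` with `sup_W`, so
`Q` is a supremum of jointly convex functions.
-/

section Convexity

variable {E F ι : Type*} [AddCommGroup E] [Module ℝ E] [AddCommGroup F] [Module ℝ F]
  {s : Set E} {t : Set F} {S : Set ι} {f : E → ℝ}

theorem concaveOn_of_attained_inf {g : ι → E → ℝ} (hs : Convex ℝ s)
    (hg : ∀ i ∈ S, ConcaveOn ℝ s (g i)) (hle : ∀ x ∈ s, ∀ i ∈ S, f x ≤ g i x)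
    (hattained : ∀ x ∈ s, ∃ i ∈ S, g i x ≤ f x) : ConcaveOn ℝ s f := by
  refine ⟨hs, fun x hx y hy a b ha hb hab => ?_⟩
  obtain ⟨i, hi, hfi⟩ := hattained _ (hs hx hy ha hb hab)
  calc a • f x + b • f y ≤ a • g i x + b • g i y := by
        gcongr
        exacts [hle x hx i hi, hle y hy i hi]
    _ ≤ g i (a • x + b • y) := (hg i hi).2 hx hy ha hb hab
    _ ≤ f (a • x + b • y) := hfi

theorem convexOn_of_attained_sup {g : ι → E → ℝ} (hs : Convex ℝ s)
    (hg : ∀ i ∈ S, ConvexOn ℝ s (g i)) (hle : ∀ x ∈ s, ∀ i ∈ S, g i x ≤ f x)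
    (hattained : ∀ x ∈ s, ∃ i ∈ S, f x ≤ g i x) : ConvexOn ℝ s f :=
  neg_concaveOn_iff.mp <| concaveOn_of_attained_inf hs (fun i hi => (hg i hi).neg)
    (fun x hx i hi => neg_le_neg (hle x hx i hi))
    fun x hx => (hattained x hx).imp fun _ h => ⟨h.1, neg_le_neg h.2⟩

theorem concaveOn_of_attained_partial_sup {h : E × F → ℝ} (hs : Convex ℝ s)
    (hh : ConcaveOn ℝ (s ×ˢ t) h) (hle : ∀ x ∈ s, ∀ v ∈ t, h (x, v) ≤ f x)
    (hattained : ∀ x ∈ s, ∃ v ∈ t, f x ≤ h (x, v)) : ConcaveOn ℝ s f := by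
  refine ⟨hs, fun x hx y hy a b ha hb hab => ?_⟩
  obtain ⟨v, hv, hfv⟩ := hattained x hx
  obtain ⟨w, hw, hfw⟩ := hattained y hy
  have hmem := hh.1 (Set.mk_mem_prod hx hv) (Set.mk_mem_prod hy hw) ha hb hab
  calc a • f x + b • f y ≤ a • h (x, v) + b • h (y, w) := by gcongr
    _ ≤ h (a • x + b • y, a • v + b • w) :=
        hh.2 (Set.mk_mem_prod hx hv) (Set.mk_mem_prod hy hw) ha hb hab
    _ ≤ f (a • x + b • y) := hle _ hmem.1 _ hmem.2

theorem convexOn_of_attained_partial_inf {h : E × F → ℝ} (hs : Convex ℝ s)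
    (hh : ConvexOn ℝ (s ×ˢ t) h) (hle : ∀ x ∈ s, ∀ v ∈ t, f x ≤ h (x, v))
    (hattained : ∀ x ∈ s, ∃ v ∈ t, h (x, v) ≤ f x) : ConvexOn ℝ s f :=
  neg_concaveOn_iff.mp <| concaveOn_of_attained_partial_sup hs hh.neg
    (fun x hx v hv => neg_le_neg (hle x hx v hv))
    fun x hx => (hattained x hx).imp fun _ h => ⟨h.1, neg_le_neg h.2⟩

theorem isClosed_setOf_convexOn_of_continuous {X : Type*} [TopologicalSpace X] {g : X → E → ℝ}
    (hg : ∀ x ∈ s, Continuous fun p => g p x) : IsClosed {p | ConvexOn ℝ s (g p)} := by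
  have hindicator : {p | ConvexOn ℝ s (g p)} = {p | ConvexOn ℝ s (s.indicator (g p))} := by
    ext p
    have heq : Set.EqOn (s.indicator (g p)) (g p) s := Set.eqOn_indicator
    exact ⟨fun h => h.congr heq.symm, fun h => h.congr heq⟩
  rw [hindicator]
  refine isClosed_setOfPred_convexOn.preimage (continuous_pi fun x => ?_)
  by_cases hx : x ∈ s
  · simpa only [Set.indicator_of_mem hx] using hg x hx
  · simpa only [Set.indicator_of_notMem hx] using continuous_const

/-- Otherwise compactness leaves finitely many `y`, whose pointwise maximum exceeds `R` on `s`, and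
Sion's theorem replaces them by a single `y`. -/
theorem exists_forall_le_of_forall_exists_le [TopologicalSpace E] [IsTopologicalAddGroup E]
    [ContinuousSMul ℝ E] [TopologicalSpace F] [IsTopologicalAddGroup F] [ContinuousSMul ℝ F]
    {f : E → F → ℝ} {R : ℝ} (hs : IsCompact s) (ht : t.Nonempty)
    (hcont₁ : ∀ y ∈ t, ContinuousOn (fun x => f x y) s)
    (hconv : ∀ y ∈ t, ConvexOn ℝ s fun x => f x y)
    (hcont₂ : ∀ x ∈ s, ContinuousOn (f x) t) (hconc : ∀ x ∈ s, ConcaveOn ℝ t (f x))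
    (h : ∀ y ∈ t, ∃ x ∈ s, f x y ≤ R) : ∃ x ∈ s, ∀ y ∈ t, f x y ≤ R := by
  by_contra! hcon
  choose! w hw hwR using hcon
  obtain ⟨y₀, hy₀⟩ := ht
  obtain ⟨x₀, hx₀, -⟩ := h y₀ hy₀
  obtain ⟨T, hT, hcover⟩ := hs.elim_nhdsWithin_subcover (fun x => {x' | R < f x' (w x)})
    fun x hx => (hcont₁ (w x) (hw x hx) x hx).eventually (lt_mem_nhds (hwR x hx))
  obtain ⟨y, hy, hyR⟩ := Sion.exists_lt_iInf_of_lt_iInf_of_finite ⟨x₀, hx₀⟩ hs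
    (fun y hy => (hcont₁ y hy).lowerSemicontinuousOn) (fun y hy => (hconv y hy).quasiconvexOn)
    (hconc x₀ hx₀).1 (fun x hx => (hcont₂ x hx).upperSemicontinuousOn)
    (fun x hx => (hconc x hx).quasiconcaveOn) (hconv y₀ hy₀).1 (T.finite_toSet.image w)
    (by rintro _ ⟨x, hx, rfl⟩; exact hw x (hT x hx)) (t := R)
    fun x hx => by
      obtain ⟨x', hx', hlt⟩ := Set.mem_iUnion₂.mp (hcover hx)
      exact ⟨w x', ⟨x', hx', rfl⟩, hlt⟩
  obtain ⟨x, hx, hle⟩ := h y hy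
  exact (hyR x hx).not_ge hle

end Convexity

section Rpow

open scoped MatrixOrder

variable {m n : Type*} [Fintype m] [DecidableEq m] [Fintype n] [DecidableEq n]
  {M N : Matrix n n ℂ}

/-- The convex cone of positive definite matrices, the domain of all functionals below. -/
def posDefSet (n : Type*) : Set (Matrix n n ℂ) :=
  {M | M.PosDef}

theorem convex_posDefSet (n : Type*) : Convex ℝ (posDefSet n) := by
  intro M hM N hN a b ha hb hab
  rcases ha.eq_or_lt with rfl | ha
  · obtain rfl : b = 1 := by simpa using hab
    simpa using hN
  · exact (Matrix.PosDef.smul hM ha).add_posSemidef (Matrix.PosSemidef.smul hN.posSemidef hb)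

theorem matPow_eq_rpow (hM : M.PosDef) (t : ℝ) : matPow M t = M ^ t := by
  rw [CFC.rpow_eq_cfc_real hM.posSemidef.nonneg, hM.1.cfc_eq, Matrix.IsHermitian.cfc,
    Unitary.conjStarAlgAut_apply, matPow, dif_pos hM.1]
  congr! 4 with i
  simp [hM.eigenvalues_pos i]

theorem rpow_eq_eigenvectorUnitary_mul (hM : M.PosDef) (t : ℝ) :
    M ^ t = (hM.1.eigenvectorUnitary : Matrix n n ℂ) *
      diagonal (fun i => ((hM.1.eigenvalues i ^ t : ℝ) : ℂ)) *
      (hM.1.eigenvectorUnitary : Matrix n n ℂ)ᴴ := by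
  rw [CFC.rpow_eq_cfc_real hM.posSemidef.nonneg, hM.1.cfc_eq, Matrix.IsHermitian.cfc,
    Unitary.conjStarAlgAut_apply]
  rfl

theorem posDef_rpow (hM : M.PosDef) (t : ℝ) : (M ^ t).PosDef :=
  (IsStrictlyPositive.rpow M t hM.isStrictlyPositive).posDef

theorem rpow_mul_rpow (hM : M.PosDef) (s t : ℝ) : M ^ s * M ^ t = M ^ (s + t) :=
  (CFC.rpow_add hM.isUnit).symm

theorem rpow_zero_of_posDef (hM : M.PosDef) : M ^ (0 : ℝ) = 1 :=
  CFC.rpow_zero M hM.posSemidef.nonneg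

theorem rpow_one_of_posDef (hM : M.PosDef) : M ^ (1 : ℝ) = M :=
  CFC.rpow_one M hM.posSemidef.nonneg

theorem rpow_rpow_of_posDef (hM : M.PosDef) (s t : ℝ) : (M ^ s) ^ t = M ^ (s * t) := by
  rcases eq_or_ne s 0 with rfl | hs
  · rw [rpow_zero_of_posDef hM, CFC.one_rpow, zero_mul, rpow_zero_of_posDef hM]
  · exact CFC.rpow_rpow M s t hs hM.isStrictlyPositive

theorem rpow_neg_of_posDef (hM : M.PosDef) (t : ℝ) : M ^ (-t) = (M ^ t)⁻¹ := by
  refine (Matrix.inv_eq_left_inv ?_).symm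
  rw [rpow_mul_rpow hM, neg_add_cancel, rpow_zero_of_posDef hM]

theorem rpow_half_mul_self (hM : M.PosDef) : M ^ (1 / 2 : ℝ) * M ^ (1 / 2 : ℝ) = M := by
  rw [rpow_mul_rpow hM, add_halves, rpow_one_of_posDef hM]

theorem continuousOn_rpow_spectrum (hM : M.PosDef) (t : ℝ) :
    ContinuousOn (fun x : ℝ => x ^ t) (spectrum ℝ M) :=
  continuousOn_id.rpow_const fun _ hx => Or.inl (hM.isStrictlyPositive.spectrum_pos hx).ne'

theorem smul_rpow_of_posDef (hM : M.PosDef) {c : ℝ} (hc : 0 < c) (t : ℝ) :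
    (c • M) ^ t = c ^ t • M ^ t := by
  have hMc : (c • M).PosDef := hM.smul hc
  have hcont : ContinuousOn (fun x : ℝ => x ^ t) ((c • ·) '' spectrum ℝ M) := by
    refine continuousOn_id.rpow_const ?_
    rintro _ ⟨x, hx, rfl⟩
    exact Or.inl (mul_pos hc (hM.isStrictlyPositive.spectrum_pos hx)).ne'
  rw [CFC.rpow_eq_cfc_real hM.posSemidef.nonneg, CFC.rpow_eq_cfc_real hMc.posSemidef.nonneg,
    ← cfc_smul _ _ _ (continuousOn_rpow_spectrum hM t), ← cfc_comp_smul c _ M hcont]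
  refine cfc_congr fun x hx => ?_
  simp only [smul_eq_mul]
  rw [Real.mul_rpow hc.le (hM.isStrictlyPositive.spectrum_pos hx).le]

theorem continuousOn_rpow_posDefSet (t : ℝ) :
    ContinuousOn (fun M : Matrix n n ℂ => M ^ t) (posDefSet n) := by
  open scoped Matrix.Norms.L2Operator in
  have hcfc : ContinuousOn (fun M : Matrix n n ℂ => cfc (fun x : ℝ => x ^ t) M) (posDefSet n) := by
    refine ContinuousOn.cfc_of_mem_nhdsSet (s := Set.Ioi 0) (fun x : ℝ => x ^ t)
      (isOpen_Ioi.mem_nhdsSet.mpr <| Set.iUnion₂_subset fun M hM x hx => ?_) continuousOn_id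
      (fun M hM => Matrix.PosDef.isHermitian hM)
      (continuousOn_id.rpow_const fun x hx => Or.inl (ne_of_gt hx))
    exact (Matrix.PosDef.isStrictlyPositive hM).spectrum_pos hx
  exact hcfc.congr fun M hM => CFC.rpow_eq_cfc_real (Matrix.PosDef.posSemidef hM).nonneg

/-- The amplification `M ↦ 1 ⊗ M` as a star-algebra homomorphism, through which the functional
calculus passes. -/
def oneKroneckerHom (m n : Type*) [Fintype m] [DecidableEq m] [Fintype n] [DecidableEq n] :
    Matrix n n ℂ →⋆ₐ[ℝ] Matrix (m × n) (m × n) ℂ where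
  toFun M := (1 : Matrix m m ℂ) ⊗ₖ M
  map_one' := Matrix.one_kronecker_one
  map_mul' M N := by rw [← Matrix.mul_kronecker_mul, one_mul]
  map_zero' := Matrix.kronecker_zero _
  map_add' M N := Matrix.kronecker_add _ _ _
  commutes' c := by
    rw [Algebra.algebraMap_eq_smul_one, Algebra.algebraMap_eq_smul_one, Matrix.kronecker_smul,
      Matrix.one_kronecker_one]
  map_star' M := by simp [Matrix.star_eq_conjTranspose, Matrix.conjTranspose_kronecker]

theorem oneKroneckerHom_apply (M : Matrix n n ℂ) :
    oneKroneckerHom m n M = (1 : Matrix m m ℂ) ⊗ₖ M := rfl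

theorem posDef_oneKroneckerHom (hM : M.PosDef) : (oneKroneckerHom m n M).PosDef :=
  Matrix.PosDef.one.kronecker hM

theorem continuous_oneKroneckerHom : Continuous (oneKroneckerHom m n) :=
  LinearMap.continuous_of_finiteDimensional (oneKroneckerHom m n).toAlgHom.toLinearMap

theorem oneKroneckerHom_rpow (hM : M.PosDef) (t : ℝ) :
    oneKroneckerHom m n (M ^ t) = oneKroneckerHom m n M ^ t := by
  have hM' : (oneKroneckerHom m n M).PosDef := posDef_oneKroneckerHom hM
  rw [CFC.rpow_eq_cfc_real hM.posSemidef.nonneg, CFC.rpow_eq_cfc_real hM'.posSemidef.nonneg]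
  exact StarAlgHomClass.map_cfc (oneKroneckerHom m n) _ M (continuousOn_rpow_spectrum hM t)
    continuous_oneKroneckerHom hM.isHermitian hM'.isHermitian

end Rpow

section TracePow

open scoped MatrixOrder

variable {m n : Type*} [Fintype m] [Fintype n]

/-- The real part of the trace as a real-linear functional; on products of positive definite
matrices it is the trace itself. -/
noncomputable def reTrace : Matrix n n ℂ →ₗ[ℝ] ℝ :=
  Complex.reLm ∘ₗ Matrix.traceLinearMap n ℝ ℂ

theorem reTrace_apply (M : Matrix n n ℂ) : reTrace M = M.trace.re := rfl

theorem reTrace_mul_comm (M : Matrix m n ℂ) (N : Matrix n m ℂ) :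
    reTrace (M * N) = reTrace (N * M) :=
  congrArg Complex.re (Matrix.trace_mul_comm M N)

theorem continuous_reTrace : Continuous (reTrace : Matrix n n ℂ → ℝ) :=
  LinearMap.continuous_of_finiteDimensional _

variable [DecidableEq n] {M N : Matrix n n ℂ}

/-- `Tr Xᵗ`, defined as the sum of the `t`-th powers of the (real parts of the) eigenvalues of `X`
with multiplicity. No positivity of `X` is built in: for positive definite `M` and `N` the product
`M * N` is in general not Hermitian, but it has the eigenvalues of `N^{1/2} M N^{1/2}`, and the
functional depends on the product only up to cyclic order. -/
noncomputable def tracePow (X : Matrix n n ℂ) (t : ℝ) : ℝ :=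
  (X.charpoly.roots.map fun z => z.re ^ t).sum

theorem tracePow_mul_comm (X Y : Matrix n n ℂ) (t : ℝ) :
    tracePow (X * Y) t = tracePow (Y * X) t := by
  rw [tracePow, tracePow, Matrix.charpoly_mul_comm]

theorem tracePow_eq_sum (hM : M.PosDef) (t : ℝ) :
    tracePow M t = ∑ i, hM.1.eigenvalues i ^ t := by
  rw [tracePow, hM.1.roots_charpoly_eq_eigenvalues, Multiset.map_map]
  rfl

theorem tracePow_eq_reTrace (hM : M.PosDef) (t : ℝ) : tracePow M t = reTrace (M ^ t) := by
  have hU : (hM.1.eigenvectorUnitary : Matrix n n ℂ)ᴴ * hM.1.eigenvectorUnitary = 1 :=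
    Unitary.coe_star_mul_self _
  rw [tracePow_eq_sum hM, rpow_eq_eigenvectorUnitary_mul hM, reTrace_mul_comm, ← mul_assoc, hU,
    one_mul, reTrace_apply, Matrix.trace_diagonal, Complex.re_sum]
  rfl

theorem tracePow_one (hM : M.PosDef) : tracePow M 1 = reTrace M := by
  rw [tracePow_eq_reTrace hM, rpow_one_of_posDef hM]

theorem tracePow_rpow (hM : M.PosDef) (s t : ℝ) : tracePow (M ^ s) t = tracePow M (s * t) := by
  rw [tracePow_eq_reTrace (posDef_rpow hM s), tracePow_eq_reTrace hM, rpow_rpow_of_posDef hM]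

theorem tracePow_pos [Nonempty n] (hM : M.PosDef) (t : ℝ) : 0 < tracePow M t := by
  rw [tracePow_eq_sum hM]
  exact Finset.sum_pos (fun i _ => Real.rpow_pos_of_pos (hM.eigenvalues_pos i) t)
    Finset.univ_nonempty

theorem tracePow_smul (hM : M.PosDef) {c : ℝ} (hc : 0 < c) (t : ℝ) :
    tracePow (c • M) t = c ^ t * tracePow M t := by
  rw [tracePow_eq_reTrace (hM.smul hc), tracePow_eq_reTrace hM, smul_rpow_of_posDef hM hc,
    map_smul, smul_eq_mul]

theorem posDef_conjTranspose_mul_mul (hM : M.PosDef) {L : Matrix n n ℂ} (hL : IsUnit L) :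
    (Lᴴ * M * L).PosDef :=
  (Matrix.IsUnit.posDef_star_left_conjugate_iff hL).mpr hM

theorem posDef_rpow_mul_mul_rpow (hM : M.PosDef) (hN : N.PosDef) (t : ℝ) :
    (N ^ t * M * N ^ t).PosDef := by
  have hNt : (N ^ t).PosDef := posDef_rpow hN t
  simpa only [hNt.isHermitian.eq] using posDef_conjTranspose_mul_mul hM hNt.isUnit

theorem tracePow_mul_eq_tracePow_sandwich (hN : N.PosDef) (X : Matrix n n ℂ) (t : ℝ) :
    tracePow (X * N) t = tracePow (N ^ (1 / 2 : ℝ) * X * N ^ (1 / 2 : ℝ)) t := by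
  rw [mul_assoc, tracePow_mul_comm (N ^ (1 / 2 : ℝ)), mul_assoc, rpow_half_mul_self hN]

theorem tracePow_mul_pos [Nonempty n] (hM : M.PosDef) (hN : N.PosDef) (t : ℝ) :
    0 < tracePow (M * N) t := by
  rw [tracePow_mul_eq_tracePow_sandwich hN]
  exact tracePow_pos (posDef_rpow_mul_mul_rpow hM hN _) t

theorem tracePow_mul_smul (hM : M.PosDef) (hN : N.PosDef) {c : ℝ} (hc : 0 < c) (t : ℝ) :
    tracePow (M * c • N) t = c ^ t * tracePow (M * N) t := by
  rw [mul_smul_comm, ← smul_mul_assoc, tracePow_mul_eq_tracePow_sandwich hN,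
    tracePow_mul_eq_tracePow_sandwich hN, mul_smul_comm, smul_mul_assoc,
    tracePow_smul (posDef_rpow_mul_mul_rpow hM hN _) hc]

theorem continuousOn_tracePow_mul (hN : N.PosDef) (t : ℝ) :
    ContinuousOn (fun M => tracePow (M * N) t) (posDefSet n) := by
  have hsandwich : ContinuousOn (fun M : Matrix n n ℂ =>
      reTrace ((N ^ (1 / 2 : ℝ) * M * N ^ (1 / 2 : ℝ)) ^ t)) (posDefSet n) := by
    refine continuous_reTrace.comp_continuousOn <| (continuousOn_rpow_posDefSet t).comp ?_
      fun M hM => posDef_rpow_mul_mul_rpow hM hN _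
    fun_prop
  refine hsandwich.congr fun M hM => ?_
  rw [tracePow_mul_eq_tracePow_sandwich hN,
    tracePow_eq_reTrace (posDef_rpow_mul_mul_rpow hM hN _)]

end TracePow

section LiebAndo

open scoped MatrixOrder
open MeasureTheory Set

variable {m n : Type*} [Fintype m] [DecidableEq m] [Fintype n] [DecidableEq n]
  {A : Matrix m m ℂ} {B : Matrix n n ℂ}

/-- The double operator trace `∑ᵢⱼ |⟨uᵢ, K vⱼ⟩|² f(aᵢ, bⱼ)` over spectral decompositions `(aᵢ, uᵢ)`
of `A` and `(bⱼ, vⱼ)` of `B`. It turns inequalities between functions of two positive real variables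
into trace inequalities. Its value is `0` unless `A` and `B` are Hermitian. -/
noncomputable def doubleTrace (K : Matrix m n ℂ) (f : ℝ → ℝ → ℝ) (A : Matrix m m ℂ)
    (B : Matrix n n ℂ) : ℝ :=
  if h : A.IsHermitian ∧ B.IsHermitian then
    ∑ i, ∑ j, Complex.normSq
      (((h.1.eigenvectorUnitary : Matrix m m ℂ)ᴴ * K * (h.2.eigenvectorUnitary : Matrix n n ℂ)) i j)
        * f (h.1.eigenvalues i) (h.2.eigenvalues j)
  else 0

theorem doubleTrace_of_posDef (hA : A.PosDef) (hB : B.PosDef) (K : Matrix m n ℂ)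
    (f : ℝ → ℝ → ℝ) :
    doubleTrace K f A B = ∑ i, ∑ j, Complex.normSq
      (((hA.1.eigenvectorUnitary : Matrix m m ℂ)ᴴ * K *
        (hB.1.eigenvectorUnitary : Matrix n n ℂ)) i j) *
      f (hA.1.eigenvalues i) (hB.1.eigenvalues j) :=
  dif_pos ⟨hA.1, hB.1⟩

theorem doubleTrace_add (K : Matrix m n ℂ) (f g : ℝ → ℝ → ℝ) :
    doubleTrace K (fun a b => f a b + g a b) A B = doubleTrace K f A B + doubleTrace K g A B := by
  unfold doubleTrace
  split_ifs <;> simp only [mul_add, Finset.sum_add_distrib, add_zero]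

theorem doubleTrace_sub (K : Matrix m n ℂ) (f g : ℝ → ℝ → ℝ) :
    doubleTrace K (fun a b => f a b - g a b) A B = doubleTrace K f A B - doubleTrace K g A B := by
  unfold doubleTrace
  split_ifs <;> simp only [mul_sub, Finset.sum_sub_distrib, sub_zero]

theorem doubleTrace_const_mul (K : Matrix m n ℂ) (c : ℝ) (f : ℝ → ℝ → ℝ) :
    doubleTrace K (fun a b => c * f a b) A B = c * doubleTrace K f A B := by
  unfold doubleTrace
  split_ifs <;> simp only [Finset.mul_sum, mul_left_comm, mul_zero]

theorem doubleTrace_mono (hA : A.PosDef) (hB : B.PosDef) (K : Matrix m n ℂ) {f g : ℝ → ℝ → ℝ}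
    (hfg : ∀ a b, 0 < a → 0 < b → f a b ≤ g a b) : doubleTrace K f A B ≤ doubleTrace K g A B := by
  rw [doubleTrace_of_posDef hA hB, doubleTrace_of_posDef hA hB]
  exact Finset.sum_le_sum fun i _ => Finset.sum_le_sum fun j _ => mul_le_mul_of_nonneg_left
    (hfg _ _ (hA.eigenvalues_pos i) (hB.eigenvalues_pos j)) (Complex.normSq_nonneg _)

theorem doubleTrace_congr (hA : A.PosDef) (hB : B.PosDef) (K : Matrix m n ℂ) {f g : ℝ → ℝ → ℝ}
    (hfg : ∀ a b, 0 < a → 0 < b → f a b = g a b) : doubleTrace K f A B = doubleTrace K g A B :=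
  le_antisymm (doubleTrace_mono hA hB K fun a b ha hb => (hfg a b ha hb).le)
    (doubleTrace_mono hA hB K fun a b ha hb => (hfg a b ha hb).ge)

theorem reTrace_conjTranspose_mul_diagonal (X : Matrix m n ℂ) (d : m → ℝ) (e : n → ℝ) :
    reTrace (Xᴴ * diagonal (fun i => (d i : ℂ)) * X * diagonal fun j => (e j : ℂ)) =
      ∑ i, ∑ j, Complex.normSq (X i j) * (d i * e j) := by
  rw [reTrace_apply, Matrix.trace, Complex.re_sum, Finset.sum_comm]
  refine Finset.sum_congr rfl fun j _ => ?_
  rw [Matrix.diag_apply, Matrix.mul_diagonal, Matrix.mul_apply, Finset.sum_mul, Complex.re_sum]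
  refine Finset.sum_congr rfl fun i _ => ?_
  rw [Matrix.mul_diagonal, Matrix.conjTranspose_apply, Complex.star_def]
  calc _ = ((Complex.normSq (X i j) * (d i * e j) : ℝ) : ℂ).re := by
        congr 1
        push_cast [Complex.normSq_eq_conj_mul_self]
        ring
    _ = _ := Complex.ofReal_re _

theorem reTrace_rpow_mul_rpow (hA : A.PosDef) (hB : B.PosDef) (K : Matrix m n ℂ) (p q : ℝ) :
    reTrace (Kᴴ * A ^ p * K * B ^ q) = doubleTrace K (fun a b => a ^ p * b ^ q) A B := by
  rw [doubleTrace_of_posDef hA hB, ← reTrace_conjTranspose_mul_diagonal,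
    rpow_eq_eigenvectorUnitary_mul hA, rpow_eq_eigenvectorUnitary_mul hB, ← mul_assoc,
    reTrace_mul_comm]
  simp only [Matrix.conjTranspose_mul, Matrix.conjTranspose_conjTranspose, Matrix.mul_assoc]

theorem reTrace_conj_eq_doubleTrace (hA : A.PosDef) (hB : B.PosDef) (K : Matrix m n ℂ) :
    reTrace (Kᴴ * A * K) = doubleTrace K (fun a _ => a) A B := by
  simpa [rpow_one_of_posDef hA, rpow_zero_of_posDef hB] using reTrace_rpow_mul_rpow hA hB K 1 0

theorem reTrace_mul_eq_doubleTrace (hA : A.PosDef) (hB : B.PosDef) (K : Matrix m n ℂ) :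
    reTrace (Kᴴ * K * B) = doubleTrace K (fun _ b => b) A B := by
  simpa [rpow_zero_of_posDef hA, rpow_one_of_posDef hB] using reTrace_rpow_mul_rpow hA hB K 0 1

theorem normSq_mul_parallelSum_le {a b t : ℝ} (ha : 0 < a) (hb : 0 < b) (ht : 0 < t) (k x : ℂ) :
    Complex.normSq k * (a * b / (a + t * b)) ≤
      t⁻¹ * (Complex.normSq x * a) + Complex.normSq (k - x) * b := by
  have real_case (u v : ℝ) : u * u * (a * b / (a + t * b)) ≤
      t⁻¹ * (v * v * a) + (u - v) * (u - v) * b := by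
    rw [← sub_nonneg]
    calc 0 ≤ ((a + t * b) * v - t * b * u) ^ 2 / (t * (a + t * b)) := by positivity
      _ = _ := by field_simp; ring
  simp only [Complex.normSq_apply, Complex.sub_re, Complex.sub_im]
  linarith [real_case k.re x.re, real_case k.im x.im]

theorem exists_normSq_parallelSum_eq {a b t : ℝ} (ha : 0 < a) (hb : 0 < b) (ht : 0 < t) (k : ℂ) :
    ∃ x : ℂ, t⁻¹ * (Complex.normSq x * a) + Complex.normSq (k - x) * b =
      Complex.normSq k * (a * b / (a + t * b)) := by
  have hab : a + t * b ≠ 0 := by positivity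
  refine ⟨k * ((t * b / (a + t * b) : ℝ) : ℂ), ?_⟩
  have hsub : k - k * ((t * b / (a + t * b) : ℝ) : ℂ) = k * ((a / (a + t * b) : ℝ) : ℂ) := by
    rw [show a / (a + t * b) = 1 - t * b / (a + t * b) by field_simp; ring]
    push_cast
    ring
  rw [hsub]
  simp only [Complex.normSq_mul, Complex.normSq_ofReal]
  field_simp
  ring

theorem doubleTrace_parallelSum_le (hA : A.PosDef) (hB : B.PosDef) (K X : Matrix m n ℂ) {t : ℝ}
    (ht : 0 < t) : doubleTrace K (fun a b => a * b / (a + t * b)) A B ≤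
      t⁻¹ * reTrace (Xᴴ * A * X) + reTrace ((K - X)ᴴ * (K - X) * B) := by
  rw [reTrace_conj_eq_doubleTrace hA hB, reTrace_mul_eq_doubleTrace hA hB]
  simp only [doubleTrace_of_posDef hA hB, Finset.mul_sum, ← Finset.sum_add_distrib,
    Matrix.mul_sub, Matrix.sub_mul, Matrix.sub_apply]
  exact Finset.sum_le_sum fun i _ => Finset.sum_le_sum fun j _ =>
    normSq_mul_parallelSum_le (hA.eigenvalues_pos i) (hB.eigenvalues_pos j) ht _ _

theorem exists_doubleTrace_parallelSum_eq (hA : A.PosDef) (hB : B.PosDef) (K : Matrix m n ℂ)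
    {t : ℝ} (ht : 0 < t) : ∃ X : Matrix m n ℂ,
      t⁻¹ * reTrace (Xᴴ * A * X) + reTrace ((K - X)ᴴ * (K - X) * B) =
        doubleTrace K (fun a b => a * b / (a + t * b)) A B := by
  set U := (hA.1.eigenvectorUnitary : Matrix m m ℂ) with hU
  set V := (hB.1.eigenvectorUnitary : Matrix n n ℂ) with hV
  choose x hx using fun i j => exists_normSq_parallelSum_eq (hA.eigenvalues_pos i)
    (hB.eigenvalues_pos j) ht ((Uᴴ * K * V) i j)
  have hX : Uᴴ * (U * of x * Vᴴ) * V = of x := by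
    have hUU : Uᴴ * U = 1 := Unitary.coe_star_mul_self hA.1.eigenvectorUnitary
    have hVV : Vᴴ * V = 1 := Unitary.coe_star_mul_self hB.1.eigenvectorUnitary
    calc Uᴴ * (U * of x * Vᴴ) * V = (Uᴴ * U) * of x * (Vᴴ * V) := by simp only [Matrix.mul_assoc]
      _ = of x := by rw [hUU, hVV, Matrix.one_mul, Matrix.mul_one]
  refine ⟨U * of x * Vᴴ, ?_⟩
  rw [reTrace_conj_eq_doubleTrace hA hB, reTrace_mul_eq_doubleTrace hA hB]
  simp only [doubleTrace_of_posDef hA hB, Finset.mul_sum, ← Finset.sum_add_distrib,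
    Matrix.mul_sub, Matrix.sub_mul, Matrix.sub_apply, ← hU, ← hV, hX]
  exact Finset.sum_congr rfl fun i _ => Finset.sum_congr rfl fun j _ => hx i j

/-- The parallel sum is variational, hence jointly concave: it is an infimum of functionals that are
linear in `(A, B)`. -/
theorem concaveOn_doubleTrace_parallelSum (K : Matrix m n ℂ) {t : ℝ} (ht : 0 < t) :
    ConcaveOn ℝ (posDefSet m ×ˢ posDefSet n)
      fun P => doubleTrace K (fun a b => a * b / (a + t * b)) P.1 P.2 := by
  refine concaveOn_of_attained_inf (S := univ) ((convex_posDefSet m).prod (convex_posDefSet n))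
    (g := fun X P => t⁻¹ * reTrace (Xᴴ * P.1 * X) + reTrace ((K - X)ᴴ * (K - X) * P.2))
    (fun X _ => ⟨(convex_posDefSet m).prod (convex_posDefSet n), ?_⟩)
    (fun P hP X _ => doubleTrace_parallelSum_le hP.1 hP.2 K X ht)
    fun P hP => (exists_doubleTrace_parallelSum_eq hP.1 hP.2 K ht).imp fun _ h => ⟨trivial, h.le⟩
  intro P _ Q _ a b _ _ _
  simp only [Prod.fst_add, Prod.snd_add, Prod.smul_fst, Prod.smul_snd, Matrix.mul_add,
    Matrix.add_mul, Matrix.mul_smul, Matrix.smul_mul, map_add, map_smul, smul_eq_mul]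
  exact le_of_eq (by ring)

theorem reTrace_rpow_mul_rpow_one_sub_eq_integral {p : ℝ} {k : ℝ → ℝ → ℝ} {μ : Measure ℝ}
    (hk : ∀ x ∈ Ici (0 : ℝ), IntegrableOn (fun t => k t x) (Ioi 0) μ ∧
      x ^ p = ∫ t in Ioi 0, k t x ∂μ) (hA : A.PosDef) (hB : B.PosDef) (K : Matrix m n ℂ) :
    IntegrableOn (fun t => doubleTrace K (fun a b => b * k t (a / b)) A B) (Ioi 0) μ ∧
    reTrace (Kᴴ * A ^ p * K * B ^ (1 - p)) =
      ∫ t in Ioi 0, doubleTrace K (fun a b => b * k t (a / b)) A B ∂μ := by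
  have hinteg (i : m) (j : n) := (hk (hA.1.eigenvalues i / hB.1.eigenvalues j)
    (div_pos (hA.eigenvalues_pos i) (hB.eigenvalues_pos j)).le).1.const_mul (hB.1.eigenvalues j)
  simp only [doubleTrace_of_posDef hA hB]
  refine ⟨integrable_finsetSum _ fun i _ => integrable_finsetSum _ fun j _ =>
    (hinteg i j).const_mul _, ?_⟩
  rw [integral_finsetSum _ fun i _ => integrable_finsetSum _ fun j _ => (hinteg i j).const_mul _,
    reTrace_rpow_mul_rpow hA hB, doubleTrace_of_posDef hA hB]
  refine Finset.sum_congr rfl fun i _ => ?_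
  rw [integral_finsetSum _ fun j _ => (hinteg i j).const_mul _]
  refine Finset.sum_congr rfl fun j _ => ?_
  have ha := hA.eigenvalues_pos i
  have hb := hB.eigenvalues_pos j
  rw [integral_const_mul, integral_const_mul, ← (hk _ (div_pos ha hb).le).2,
    Real.div_rpow ha.le hb.le, Real.rpow_sub hb, Real.rpow_one]
  field_simp

/-- **Lieb's concavity theorem** for exponents `p` and `1 - p`. -/
theorem concaveOn_reTrace_rpow_mul_rpow_one_sub (K : Matrix m n ℂ) {p : ℝ} (hp : p ∈ Ioo 0 1) :
    ConcaveOn ℝ (posDefSet m ×ˢ posDefSet n)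
      fun P => reTrace (Kᴴ * P.1 ^ p * K * P.2 ^ (1 - p)) := by
  have hconv := (convex_posDefSet m).prod (convex_posDefSet n)
  obtain ⟨μ, hμ⟩ := Real.exists_measure_rpow_eq_integral_rpowIntegrand₀₁ hp
  refine (integral_concaveOn_of_integrand_ae hconv ?_ fun P hP =>
    (reTrace_rpow_mul_rpow_one_sub_eq_integral hμ hP.1 hP.2 K).1).congr fun P hP =>
    (reTrace_rpow_mul_rpow_one_sub_eq_integral hμ hP.1 hP.2 K).2.symm
  refine ae_restrict_of_forall_mem measurableSet_Ioi fun t (ht : 0 < t) => ?_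
  refine ((concaveOn_doubleTrace_parallelSum K ht).smul (Real.rpow_nonneg ht.le (p - 1))).congr
    fun P hP => ?_
  beta_reduce
  rw [smul_eq_mul, ← doubleTrace_const_mul]
  refine doubleTrace_congr hP.1 hP.2 K fun a b ha hb => ?_
  rw [Real.rpowIntegrand₀₁_eq_pow_div hp ht.le (div_pos ha hb).le]
  field_simp
  ring

theorem convexOn_reTrace_rpow_mul_rpow_one_sub_of_mem_Ioo (K : Matrix m n ℂ) {p : ℝ}
    (hp : p ∈ Ioo 1 2) :
    ConvexOn ℝ (posDefSet m ×ˢ posDefSet n)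
      fun P => reTrace (Kᴴ * P.1 ^ p * K * P.2 ^ (1 - p)) := by
  have hconv := (convex_posDefSet m).prod (convex_posDefSet n)
  obtain ⟨μ, hμ⟩ := Real.exists_measure_rpow_eq_integral_rpowIntegrand₁₂ hp
  refine (integral_convexOn_of_integrand_ae hconv ?_ fun P hP =>
    (reTrace_rpow_mul_rpow_one_sub_eq_integral hμ hP.1 hP.2 K).1).congr fun P hP =>
    (reTrace_rpow_mul_rpow_one_sub_eq_integral hμ hP.1 hP.2 K).2.symm
  refine ae_restrict_of_forall_mem measurableSet_Ioi fun t (ht : 0 < t) => ?_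
  have hlinear : ConvexOn ℝ (posDefSet m ×ˢ posDefSet n)
      fun P => t⁻¹ * reTrace (Kᴴ * P.1 * K) := by
    refine ⟨hconv, fun P _ Q _ a b _ _ _ => le_of_eq ?_⟩
    simp only [Prod.fst_add, Prod.smul_fst, Matrix.mul_add, Matrix.add_mul, Matrix.mul_smul,
      Matrix.smul_mul, map_add, map_smul, smul_eq_mul]
    ring
  refine ((hlinear.sub (concaveOn_doubleTrace_parallelSum K ht)).smul
    (Real.rpow_nonneg ht.le (p - 1))).congr fun P hP => ?_
  beta_reduce
  rw [Pi.sub_apply, smul_eq_mul, reTrace_conj_eq_doubleTrace hP.1 hP.2, ← doubleTrace_const_mul,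
    ← doubleTrace_sub, ← doubleTrace_const_mul]
  refine doubleTrace_congr hP.1 hP.2 K fun a b ha hb => ?_
  rw [Real.rpowIntegrand₁₂]
  field_simp
  ring

/-- **Ando's convexity theorem** for exponents `p` and `1 - p`. -/
theorem convexOn_reTrace_rpow_mul_rpow_one_sub (K : Matrix m n ℂ) {p : ℝ} (hp : p ∈ Icc 1 2) :
    ConvexOn ℝ (posDefSet m ×ˢ posDefSet n)
      fun P => reTrace (Kᴴ * P.1 ^ p * K * P.2 ^ (1 - p)) := by
  have hclosed : IsClosed {p : ℝ | ConvexOn ℝ (posDefSet m ×ˢ posDefSet n)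
      fun P => reTrace (Kᴴ * P.1 ^ p * K * P.2 ^ (1 - p))} := by
    refine isClosed_setOf_convexOn_of_continuous fun P hP => ?_
    simp only [reTrace_rpow_mul_rpow hP.1 hP.2, doubleTrace_of_posDef hP.1 hP.2]
    refine continuous_finsetSum _ fun i _ => continuous_finsetSum _ fun j _ => ?_
    have ha := (Matrix.PosDef.eigenvalues_pos hP.1 i).ne'
    have hb := (Matrix.PosDef.eigenvalues_pos hP.2 j).ne'
    exact continuous_const.mul ((Real.continuous_const_rpow ha).mul
      ((Real.continuous_const_rpow hb).comp (continuous_const.sub continuous_id)))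
  rw [← closure_Ioo (by norm_num)] at hp
  exact closure_minimal
    (fun q hq => convexOn_reTrace_rpow_mul_rpow_one_sub_of_mem_Ioo K hq) hclosed hp

end LiebAndo

section Young

open scoped MatrixOrder
open Set

variable {n : Type*} [Fintype n] [DecidableEq n] {M N P V : Matrix n n ℂ}

theorem reTrace_rpow_mul_rpow_eq_doubleTrace_one (hM : M.PosDef) (hN : N.PosDef) (p q : ℝ) :
    reTrace (M ^ p * N ^ q) = doubleTrace 1 (fun a b => a ^ p * b ^ q) M N := by
  simpa using reTrace_rpow_mul_rpow hM hN 1 p q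

theorem reTrace_mul_rpow_eq_doubleTrace_one (hM : M.PosDef) (hN : N.PosDef) (q : ℝ) :
    reTrace (M * N ^ q) = doubleTrace 1 (fun a b => a * b ^ q) M N := by
  simpa [rpow_one_of_posDef hM] using reTrace_rpow_mul_rpow_eq_doubleTrace_one hM hN 1 q

theorem tracePow_eq_doubleTrace_left (hM : M.PosDef) (hN : N.PosDef) (t : ℝ) :
    tracePow M t = doubleTrace 1 (fun a _ => a ^ t) M N := by
  simpa [rpow_zero_of_posDef hN, ← tracePow_eq_reTrace hM] using
    reTrace_rpow_mul_rpow_eq_doubleTrace_one hM hN t 0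

theorem tracePow_eq_doubleTrace_right (hM : M.PosDef) (hN : N.PosDef) (t : ℝ) :
    tracePow N t = doubleTrace 1 (fun _ b => b ^ t) M N := by
  simpa [rpow_zero_of_posDef hM, ← tracePow_eq_reTrace hN] using
    reTrace_rpow_mul_rpow_eq_doubleTrace_one hM hN 0 t

theorem mul_rpow_one_sub_inv_le {a b β : ℝ} (ha : 0 < a) (hb : 0 < b) (hβ : 1 ≤ β) :
    β * (a * b ^ (1 - 1 / β)) ≤ a ^ β + (β - 1) * b := by
  have hβ0 : 0 < β := one_pos.trans_le hβ
  have hweight : 0 ≤ 1 - 1 / β := sub_nonneg.mpr ((div_le_one hβ0).mpr hβ)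
  have amgm := Real.geom_mean_le_arith_mean2_weighted (one_div_pos.mpr hβ0).le hweight
    (Real.rpow_nonneg ha.le β) hb.le (by ring)
  rw [← Real.rpow_mul ha.le, mul_one_div_cancel hβ0.ne', Real.rpow_one] at amgm
  calc β * (a * b ^ (1 - 1 / β)) ≤ β * (1 / β * a ^ β + (1 - 1 / β) * b) := by gcongr
    _ = a ^ β + (β - 1) * b := by field_simp

theorem rpow_le_mul_rpow_one_sub_inv {a b α : ℝ} (ha : 0 < a) (hb : 0 < b) (hα : 0 < α)
    (hα₁ : α ≤ 1) : a ^ α ≤ α * (a * b ^ (1 - 1 / α)) + (1 - α) * b := by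
  have amgm := Real.geom_mean_le_arith_mean2_weighted hα.le (sub_nonneg.mpr hα₁)
    (mul_pos ha (Real.rpow_pos_of_pos hb (1 - 1 / α))).le hb.le (by ring)
  rwa [Real.mul_rpow ha.le (Real.rpow_nonneg hb.le _), ← Real.rpow_mul hb.le, mul_assoc,
    ← Real.rpow_add hb, show (1 - 1 / α) * α + (1 - α) = 0 by field_simp; ring, Real.rpow_zero,
    mul_one] at amgm

theorem reTrace_mul_rpow_le (hP : P.PosDef) (hV : V.PosDef) {β : ℝ} (hβ : 1 ≤ β) :
    β * reTrace (P * V ^ (1 - 1 / β)) ≤ tracePow P β + (β - 1) * reTrace V := by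
  rw [reTrace_mul_rpow_eq_doubleTrace_one hP hV, ← tracePow_one hV,
    tracePow_eq_doubleTrace_left hP hV, tracePow_eq_doubleTrace_right hP hV,
    ← doubleTrace_const_mul, ← doubleTrace_const_mul, ← doubleTrace_add]
  refine doubleTrace_mono hP hV 1 fun a b ha hb => ?_
  simpa only [Real.rpow_one] using mul_rpow_one_sub_inv_le ha hb hβ

theorem tracePow_le_reTrace_mul_rpow (hP : P.PosDef) (hV : V.PosDef) {α : ℝ} (hα : 0 < α)
    (hα₁ : α ≤ 1) :
    tracePow P α ≤ α * reTrace (P * V ^ (1 - 1 / α)) + (1 - α) * reTrace V := by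
  rw [reTrace_mul_rpow_eq_doubleTrace_one hP hV, ← tracePow_one hV,
    tracePow_eq_doubleTrace_left hP hV, tracePow_eq_doubleTrace_right hP hV,
    ← doubleTrace_const_mul, ← doubleTrace_const_mul, ← doubleTrace_add]
  refine doubleTrace_mono hP hV 1 fun a b ha hb => ?_
  simpa only [Real.rpow_one] using rpow_le_mul_rpow_one_sub_inv ha hb hα hα₁

theorem reTrace_mul_rpow_rpow_self (hP : P.PosDef) {t : ℝ} (ht : t ≠ 0) :
    reTrace (P * (P ^ t) ^ (1 - 1 / t)) = tracePow P t := by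
  rw [rpow_rpow_of_posDef hP, tracePow_eq_reTrace hP]
  nth_rw 1 [← rpow_one_of_posDef hP]
  rw [rpow_mul_rpow hP, show 1 + t * (1 - 1 / t) = t by field_simp; ring]

variable {E : Type*} [AddCommGroup E] [Module ℝ E] {s : Set E} {Q : E → Matrix n n ℂ}

theorem concaveOn_tracePow_of_concaveOn_reTrace_mul_rpow (hs : Convex ℝ s)
    (hQ : ∀ x ∈ s, (Q x).PosDef) {β : ℝ} (hβ : 1 ≤ β)
    (h : ConcaveOn ℝ (s ×ˢ posDefSet n) fun z => reTrace (Q z.1 * z.2 ^ (1 - 1 / β))) :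
    ConcaveOn ℝ s fun x => tracePow (Q x) β := by
  have hβ0 : 0 < β := one_pos.trans_le hβ
  refine concaveOn_of_attained_partial_sup (t := posDefSet n)
    (h := fun z => β * reTrace (Q z.1 * z.2 ^ (1 - 1 / β)) - (β - 1) * reTrace z.2) hs ?_ ?_ ?_
  · exact (h.smul hβ0.le).sub ((LinearMap.convexOn (reTrace ∘ₗ LinearMap.snd ℝ E _) h.1).smul
      (sub_nonneg.mpr hβ))
  · exact fun x hx V hV => sub_le_iff_le_add.mpr (reTrace_mul_rpow_le (hQ x hx) hV hβ)
  · refine fun x hx => ⟨Q x ^ β, posDef_rpow (hQ x hx) β, ?_⟩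
    rw [reTrace_mul_rpow_rpow_self (hQ x hx) hβ0.ne', ← tracePow_eq_reTrace (hQ x hx)]
    linarith

theorem convexOn_tracePow_of_convexOn_reTrace_mul_rpow (hs : Convex ℝ s)
    (hQ : ∀ x ∈ s, (Q x).PosDef) {α : ℝ} (hα : 0 < α) (hα₁ : α ≤ 1)
    (h : ConvexOn ℝ (s ×ˢ posDefSet n) fun z => reTrace (Q z.1 * z.2 ^ (1 - 1 / α))) :
    ConvexOn ℝ s fun x => tracePow (Q x) α := by
  refine convexOn_of_attained_partial_inf (t := posDefSet n)
    (h := fun z => α * reTrace (Q z.1 * z.2 ^ (1 - 1 / α)) + (1 - α) * reTrace z.2) hs ?_ ?_ ?_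
  · exact (h.smul hα.le).add ((LinearMap.convexOn (reTrace ∘ₗ LinearMap.snd ℝ E _) h.1).smul
      (sub_nonneg.mpr hα₁))
  · exact fun x hx V hV => tracePow_le_reTrace_mul_rpow (hQ x hx) hV hα hα₁
  · refine fun x hx => ⟨Q x ^ α, posDef_rpow (hQ x hx) α, ?_⟩
    rw [reTrace_mul_rpow_rpow_self (hQ x hx) hα.ne', ← tracePow_eq_reTrace (hQ x hx)]
    linarith

theorem convexOn_tracePow {β : ℝ} (hβ : 1 ≤ β) :
    ConvexOn ℝ (posDefSet n) fun M => tracePow M β := by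
  have hβ0 : 0 < β := one_pos.trans_le hβ
  refine convexOn_of_attained_sup (S := posDefSet n) (convex_posDefSet n)
    (g := fun V M => β * reTrace (M * V ^ (1 - 1 / β)) - (β - 1) * reTrace V) ?_
    (fun M hM V hV => sub_le_iff_le_add.mpr (reTrace_mul_rpow_le hM hV hβ)) ?_
  · exact fun V _ => ((LinearMap.convexOn (reTrace ∘ₗ LinearMap.mulRight ℝ (V ^ (1 - 1 / β)))
      (convex_posDefSet n)).smul hβ0.le).sub (concaveOn_const _ (convex_posDefSet n))
  · refine fun M hM => ⟨M ^ β, posDef_rpow hM β, ?_⟩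
    rw [reTrace_mul_rpow_rpow_self hM hβ0.ne', ← tracePow_eq_reTrace hM]
    linarith

theorem concaveOn_tracePow {α : ℝ} (hα : 0 < α) (hα₁ : α ≤ 1) :
    ConcaveOn ℝ (posDefSet n) fun M => tracePow M α := by
  refine concaveOn_of_attained_inf (S := posDefSet n) (convex_posDefSet n)
    (g := fun V M => α * reTrace (M * V ^ (1 - 1 / α)) + (1 - α) * reTrace V) ?_
    (fun M hM V hV => tracePow_le_reTrace_mul_rpow hM hV hα hα₁) ?_
  · exact fun V _ => ((LinearMap.concaveOn (reTrace ∘ₗ LinearMap.mulRight ℝ (V ^ (1 - 1 / α)))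
      (convex_posDefSet n)).smul hα.le).add (concaveOn_const _ (convex_posDefSet n))
  · refine fun M hM => ⟨M ^ α, posDef_rpow hM α, ?_⟩
    rw [reTrace_mul_rpow_rpow_self hM hα.ne', ← tracePow_eq_reTrace hM]
    linarith

theorem convexOn_tracePow_mul (hN : N.PosDef) {β : ℝ} (hβ : 1 ≤ β) :
    ConvexOn ℝ (posDefSet n) fun M => tracePow (M * N) β := by
  simp only [tracePow_mul_eq_tracePow_sandwich hN]
  exact ((convexOn_tracePow hβ).comp_linearMap
    (LinearMap.mulLeftRight ℝ (N ^ (1 / 2 : ℝ), N ^ (1 / 2 : ℝ)))).subset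
    (fun M hM => posDef_rpow_mul_mul_rpow hM hN _) (convex_posDefSet n)

theorem concaveOn_tracePow_mul (hN : N.PosDef) {α : ℝ} (hα : 0 < α) (hα₁ : α ≤ 1) :
    ConcaveOn ℝ (posDefSet n) fun M => tracePow (M * N) α := by
  simp only [tracePow_mul_eq_tracePow_sandwich hN]
  exact ((concaveOn_tracePow hα hα₁).comp_linearMap
    (LinearMap.mulLeftRight ℝ (N ^ (1 / 2 : ℝ), N ^ (1 / 2 : ℝ)))).subset
    (fun M hM => posDef_rpow_mul_mul_rpow hM hN _) (convex_posDefSet n)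

end Young

section Epstein

open scoped MatrixOrder
open Set Filter Topology

variable {n : Type*} [Fintype n] [DecidableEq n] {M N : Matrix n n ℂ}

/-- **Epstein's concavity theorem.** -/
theorem concaveOn_tracePow_rpow_mul (hN : N.PosDef) {p : ℝ} (hp : p ∈ Ioo 0 1) :
    ConcaveOn ℝ (posDefSet n) fun M => tracePow (M ^ p * N) (1 / p) := by
  have hlieb := concaveOn_reTrace_rpow_mul_rpow_one_sub (N ^ (1 / 2 : ℝ)) hp
  simp only [(posDef_rpow hN _).isHermitian.eq] at hlieb
  simp only [tracePow_mul_eq_tracePow_sandwich hN]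
  refine concaveOn_tracePow_of_concaveOn_reTrace_mul_rpow (convex_posDefSet n)
    (fun M hM => posDef_rpow_mul_mul_rpow (posDef_rpow hM p) hN _)
    (one_le_one_div hp.1 hp.2.le) ?_
  simpa only [one_div_one_div] using hlieb

theorem tracePow_sub_tracePow_le (hM : M.PosDef) (hN : N.PosDef) {β : ℝ} (hβ : 1 ≤ β) :
    tracePow M β - tracePow N β ≤ β * reTrace ((M - N) * M ^ (β - 1)) := by
  have hβ0 : β ≠ 0 := (one_pos.trans_le hβ).ne'
  have hyoung := reTrace_mul_rpow_le hN (posDef_rpow hM β) hβ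
  have hself := reTrace_mul_rpow_rpow_self hM hβ0
  rw [rpow_rpow_of_posDef hM, show β * (1 - 1 / β) = β - 1 by field_simp] at hyoung hself
  rw [sub_mul, map_sub, hself]
  rw [← tracePow_eq_reTrace hM] at hyoung
  linarith

theorem reTrace_rpow_mul_le (hM : M.PosDef) (hN : N.PosDef) {p : ℝ} (hp : p ∈ Icc 0 1) :
    reTrace (M ^ p * N) ≤ (1 - p) * reTrace N + p * reTrace (M * N) := by
  have hMN := reTrace_rpow_mul_rpow_eq_doubleTrace_one hM hN
  have hpow := hMN p 1
  have hzero := hMN 0 1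
  have hone := hMN 1 1
  simp only [rpow_one_of_posDef hN, rpow_one_of_posDef hM, rpow_zero_of_posDef hM, one_mul,
    Real.rpow_one, Real.rpow_zero] at hpow hzero hone
  rw [hpow, hzero, hone, ← doubleTrace_const_mul, ← doubleTrace_const_mul, ← doubleTrace_add]
  refine doubleTrace_mono hM hN 1 fun a b ha hb => ?_
  have amgm := Real.geom_mean_le_arith_mean2_weighted (sub_nonneg.mpr hp.2) hp.1 zero_le_one ha.le
    (by ring)
  rw [Real.one_rpow, one_mul] at amgm
  nlinarith

theorem tracePow_smul_rpow_mul (hM : M.PosDef) (hN : N.PosDef) {c p : ℝ} (hc : 0 < c)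
    (hp : p ≠ 0) : tracePow ((c • M) ^ p * N) (1 / p) = c * tracePow (M ^ p * N) (1 / p) := by
  rw [smul_rpow_of_posDef hM hc, tracePow_mul_comm,
    tracePow_mul_smul hN (posDef_rpow hM p) (Real.rpow_pos_of_pos hc p), tracePow_mul_comm,
    ← Real.rpow_mul hc.le, mul_one_div_cancel hp, Real.rpow_one]

theorem tracePow_rpow_mul_add_le {M' : Matrix n n ℂ} (hM : M.PosDef) (hM' : M'.PosDef)
    (hN : N.PosDef) {p : ℝ} (hp : p ∈ Ioo 0 1) :
    tracePow (M ^ p * N) (1 / p) + tracePow (M' ^ p * N) (1 / p) ≤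
      tracePow ((M + M') ^ p * N) (1 / p) := by
  have hhalf : (0 : ℝ) < 1 / 2 := by norm_num
  have hconc := (concaveOn_tracePow_rpow_mul hN hp).2 hM hM' hhalf.le hhalf.le (add_halves 1)
  beta_reduce at hconc
  rw [← smul_add, ← smul_add, tracePow_smul_rpow_mul (hM.add hM') hN hhalf hp.1.ne',
    smul_eq_mul] at hconc
  linarith

theorem tracePow_rpow_mul_le_reTrace_mul_sandwich (hM : M.PosDef) (hN : N.PosDef) {p : ℝ}
    (hp : p ∈ Ioo 0 1) {h : ℝ} (hh : 0 < h) :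
    tracePow (M ^ p * N) (1 / p) ≤ reTrace (M * (N ^ (1 / 2 : ℝ) *
      (N ^ (1 / 2 : ℝ) * (1 + h • M) ^ p * N ^ (1 / 2 : ℝ)) ^ (1 / p - 1) * N ^ (1 / 2 : ℝ))) := by
  have hA : (1 + h • M).PosDef := Matrix.PosDef.one.add (hM.smul hh)
  set A := 1 + h • M with hA_def
  set R := N ^ (1 / 2 : ℝ)
  have hRR : R * R = N := rpow_half_mul_self hN
  set P := R * A ^ p * R
  have hP : P.PosDef := posDef_rpow_mul_mul_rpow (posDef_rpow hA p) hN _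
  have hX : (R * P ^ (1 / p - 1) * R).PosDef := posDef_rpow_mul_mul_rpow (posDef_rpow hP _) hN _
  set X := R * P ^ (1 / p - 1) * R
  have hsuper : tracePow N (1 / p) + h * tracePow (M ^ p * N) (1 / p) ≤ tracePow P (1 / p) := by
    have hadd := tracePow_rpow_mul_add_le Matrix.PosDef.one (hM.smul hh) hN hp
    rwa [tracePow_smul_rpow_mul hM hN hh hp.1.ne', CFC.one_rpow, one_mul,
      tracePow_mul_eq_tracePow_sandwich hN ((1 + h • M) ^ p)] at hadd
  have hgrad : tracePow P (1 / p) - tracePow N (1 / p) ≤ h * reTrace (M * X) := by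
    calc tracePow P (1 / p) - tracePow N (1 / p)
        ≤ 1 / p * reTrace ((P - N) * P ^ (1 / p - 1)) :=
          tracePow_sub_tracePow_le hP hN (one_le_one_div hp.1 hp.2.le)
      _ = 1 / p * (reTrace (A ^ p * X) - reTrace X) := by
          have hfactor : P - N = R * ((A ^ p - 1) * R) := by
            rw [sub_mul, mul_sub, one_mul, hRR, ← mul_assoc]
          rw [hfactor, mul_assoc, reTrace_mul_comm, ← map_sub, ← sub_one_mul]
          simp only [X, mul_assoc]
      _ ≤ 1 / p * ((1 - p) * reTrace X + p * reTrace (A * X) - reTrace X) := by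
          have hp0 := hp.1
          gcongr
          exact reTrace_rpow_mul_le hA hX ⟨hp.1.le, hp.2.le⟩
      _ = h * reTrace (M * X) := by
          have hp0 := hp.1.ne'
          rw [hA_def, add_mul, one_mul, map_add, smul_mul_assoc, map_smul, smul_eq_mul]
          field_simp
          ring
  nlinarith

/-- The concave functional `f M = Tr (N Mᵖ)^(1/p)` is homogeneous of degree one, so
`f M ≤ h⁻¹ (f (1 + h M) - f 1)` for every `h > 0`; as `h → 0` the right-hand side tends to the
derivative `Tr (M N^(1/p))` of `f` at `1`. -/
theorem tracePow_rpow_mul_le (hM : M.PosDef) (hN : N.PosDef) {p : ℝ} (hp : p ∈ Ioo 0 1) :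
    tracePow (M ^ p * N) (1 / p) ≤ reTrace (M * N ^ (1 / p)) := by
  set R := N ^ (1 / 2 : ℝ)
  have hcont : ContinuousOn (fun h : ℝ => reTrace (M * (R *
      (R * (1 + h • M) ^ p * R) ^ (1 / p - 1) * R))) (Ici 0) := by
    have hA : ∀ h ∈ Ici (0 : ℝ), (1 + h • M).PosDef := fun h hh =>
      Matrix.PosDef.one.add_posSemidef (hM.posSemidef.smul hh)
    have hAp : ContinuousOn (fun h : ℝ => (1 + h • M) ^ p) (Ici 0) :=
      (continuousOn_rpow_posDefSet p).comp (by fun_prop) hA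
    have hP : ContinuousOn (fun h : ℝ => (R * (1 + h • M) ^ p * R) ^ (1 / p - 1)) (Ici 0) :=
      (continuousOn_rpow_posDefSet _).comp (by fun_prop) fun h hh =>
        posDef_rpow_mul_mul_rpow (posDef_rpow (hA h hh) p) hN _
    exact continuous_reTrace.comp_continuousOn (by fun_prop)
  have hlim := (hcont 0 self_mem_Ici).mono_left (nhdsWithin_mono 0 Ioi_subset_Ici_self)
  have hzero : R * (R * (1 + (0 : ℝ) • M) ^ p * R) ^ (1 / p - 1) * R = N ^ (1 / p) := by
    rw [zero_smul, add_zero, CFC.one_rpow, mul_one, rpow_half_mul_self hN, rpow_mul_rpow hN,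
      rpow_mul_rpow hN, show 1 / 2 + (1 / p - 1) + 1 / 2 = 1 / p by ring]
  beta_reduce at hlim
  rw [hzero] at hlim
  exact ge_of_tendsto hlim (eventually_mem_nhdsWithin.mono fun h hh =>
    tracePow_rpow_mul_le_reTrace_mul_sandwich hM hN hp hh)

/-- The **Lieb–Thirring inequality**. -/
theorem tracePow_mul_le_reTrace_rpow_mul_rpow (hM : M.PosDef) (hN : N.PosDef) {t : ℝ}
    (ht : 1 < t) : tracePow (M * N) t ≤ reTrace (M ^ t * N ^ t) := by
  have ht0 : 0 < t := one_pos.trans ht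
  have h := tracePow_rpow_mul_le (posDef_rpow hM t) hN
    ⟨one_div_pos.mpr ht0, (div_lt_one ht0).mpr ht⟩
  rwa [rpow_rpow_of_posDef hM, mul_one_div_cancel ht0.ne', rpow_one_of_posDef hM,
    one_div_one_div] at h

end Epstein

section Holder

open scoped MatrixOrder

variable {n : Type*} [Fintype n] [DecidableEq n] {M N X Y Z : Matrix n n ℂ} {α β s : ℝ}

theorem div_add_div_eq_one_of_one_div_eq (hα : α ≠ 0) (hexp : 1 / α = 1 / s + 1 / β) :
    α / s + α / β = 1 := by
  rw [div_eq_mul_one_div, div_eq_mul_one_div α β, ← mul_add, ← hexp, mul_one_div_cancel hα]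

theorem tracePow_mul_le_of_one_lt (hM : M.PosDef) (hN : N.PosDef) (hs : 0 < s) (hβ : 0 < β)
    (hα : 1 < α) (hexp : 1 / α = 1 / s + 1 / β) :
    tracePow (M * N) α ≤ α / s * tracePow M s + α / β * tracePow N β := by
  have hα0 : 0 < α := one_pos.trans hα
  refine (tracePow_mul_le_reTrace_rpow_mul_rpow hM hN hα).trans ?_
  rw [reTrace_rpow_mul_rpow_eq_doubleTrace_one hM hN, tracePow_eq_doubleTrace_left hM hN,
    tracePow_eq_doubleTrace_right hM hN, ← doubleTrace_const_mul, ← doubleTrace_const_mul,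
    ← doubleTrace_add]
  refine doubleTrace_mono hM hN 1 fun a b ha hb => ?_
  have amgm := Real.geom_mean_le_arith_mean2_weighted (div_pos hα0 hs).le (div_pos hα0 hβ).le
    (Real.rpow_nonneg ha.le s) (Real.rpow_nonneg hb.le β)
    (div_add_div_eq_one_of_one_div_eq hα0.ne' hexp)
  rwa [← Real.rpow_mul ha.le, ← Real.rpow_mul hb.le, mul_div_cancel₀ _ hs.ne',
    mul_div_cancel₀ _ hβ.ne'] at amgm

theorem tracePow_mul_le_of_le_one (hM : M.PosDef) (hN : N.PosDef) (hs : 0 < s) (hβ : 1 ≤ β)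
    (hα : 0 < α) (hα₁ : α ≤ 1) (hexp : 1 / α = 1 / s + 1 / β) :
    tracePow (M * N) α ≤ α / s * tracePow M s + α / β * tracePow N β := by
  have hβ0 : 0 < β := one_pos.trans_le hβ
  have hyoung_α := tracePow_le_reTrace_mul_rpow (posDef_rpow_mul_mul_rpow hN hM (1 / 2))
    (posDef_rpow hM s) hα hα₁
  have hyoung_β := reTrace_mul_rpow_le hN (posDef_rpow hM s) hβ
  have hcommon : reTrace (M ^ (1 / 2 : ℝ) * N * M ^ (1 / 2 : ℝ) * (M ^ s) ^ (1 - 1 / α)) =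
      reTrace (N * (M ^ s) ^ (1 - 1 / β)) := by
    rw [rpow_rpow_of_posDef hM, rpow_rpow_of_posDef hM, mul_assoc, rpow_mul_rpow hM, mul_assoc,
      reTrace_mul_comm, mul_assoc, rpow_mul_rpow hM, hexp,
      show 1 / 2 + s * (1 - (1 / s + 1 / β)) + 1 / 2 = s * (1 - 1 / β) by field_simp; ring]
  rw [← tracePow_mul_eq_tracePow_sandwich hM, tracePow_mul_comm, hcommon,
    ← tracePow_eq_reTrace hM] at hyoung_α
  rw [← tracePow_eq_reTrace hM] at hyoung_β
  have hweight : α / s = 1 - α / β :=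
    eq_sub_of_add_eq (div_add_div_eq_one_of_one_div_eq hα.ne' hexp)
  calc tracePow (M * N) α
      ≤ α / β * (β * reTrace (N * (M ^ s) ^ (1 - 1 / β))) + (1 - α) * tracePow M s := by
        rw [← mul_assoc, div_mul_cancel₀ _ hβ0.ne']
        exact hyoung_α
    _ ≤ α / β * (tracePow N β + (β - 1) * tracePow M s) + (1 - α) * tracePow M s := by gcongr
    _ = α / s * tracePow M s + α / β * tracePow N β := by rw [hweight]; field_simp; ring

theorem tracePow_mul_le (hM : M.PosDef) (hN : N.PosDef) (hs : 0 < s) (hβ : 1 ≤ β)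
    (hexp : 1 / α = 1 / s + 1 / β) :
    tracePow (M * N) α ≤ α / s * tracePow M s + α / β * tracePow N β := by
  have hβ0 : 0 < β := one_pos.trans_le hβ
  have hα : 0 < α := one_div_pos.mp (hexp ▸ by positivity)
  rcases le_or_gt α 1 with hα₁ | hα₁
  · exact tracePow_mul_le_of_le_one hM hN hs hβ hα hα₁ hexp
  · exact tracePow_mul_le_of_one_lt hM hN hs hβ0 hα₁ hexp

theorem rpow_mul_rpow_neg (hZ : Z.PosDef) (t : ℝ) : Z ^ t * Z ^ (-t) = 1 := by
  rw [rpow_mul_rpow hZ, add_neg_cancel, rpow_zero_of_posDef hZ]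

theorem rpow_neg_mul_rpow (hZ : Z.PosDef) (t : ℝ) : Z ^ (-t) * Z ^ t = 1 :=
  mul_eq_one_comm.mp (rpow_mul_rpow_neg hZ t)

theorem tracePow_sandwich_mul_sandwich (hZ : Z.PosDef) (X Y : Matrix n n ℂ) (r t : ℝ) :
    tracePow (Z ^ r * X * Z ^ r * (Z ^ (-r) * Y * Z ^ (-r))) t = tracePow (X * Y) t := by
  have hcancel : Z ^ r * X * Z ^ r * (Z ^ (-r) * Y * Z ^ (-r)) = Z ^ r * (X * Y * Z ^ (-r)) := by
    simp only [mul_assoc]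
    rw [← mul_assoc (Z ^ r) (Z ^ (-r)), rpow_mul_rpow_neg hZ, one_mul]
  rw [hcancel, tracePow_mul_comm, mul_assoc, rpow_neg_mul_rpow hZ, mul_one]

theorem tracePow_inv_mul (hZ : Z.PosDef) (Y : Matrix n n ℂ) (t : ℝ) :
    tracePow (Z⁻¹ * Y) t = tracePow (Z ^ (-(1 / 2) : ℝ) * Y * Z ^ (-(1 / 2) : ℝ)) t := by
  have hinv : Z⁻¹ = Z ^ (-(1 / 2) : ℝ) * Z ^ (-(1 / 2) : ℝ) := by
    rw [rpow_mul_rpow hZ, ← neg_add, add_halves, rpow_neg_of_posDef hZ, rpow_one_of_posDef hZ]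
  rw [hinv, mul_assoc, tracePow_mul_comm]

theorem tracePow_mul_le_mul_inv_mul (hX : X.PosDef) (hY : Y.PosDef) (hZ : Z.PosDef) (hs : 0 < s)
    (hβ : 1 ≤ β) (hexp : 1 / α = 1 / s + 1 / β) :
    tracePow (X * Y) α ≤ α / s * tracePow (X * Z) s + α / β * tracePow (Z⁻¹ * Y) β := by
  rw [← tracePow_sandwich_mul_sandwich hZ X Y (1 / 2), tracePow_mul_eq_tracePow_sandwich hZ,
    tracePow_inv_mul hZ]
  exact tracePow_mul_le (posDef_rpow_mul_mul_rpow hX hZ _) (posDef_rpow_mul_mul_rpow hY hZ _)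
    hs hβ hexp

theorem exists_tracePow_mul_inv_mul_eq (hX : X.PosDef) (hY : Y.PosDef) (hα : α ≠ 0) (hs : s ≠ 0)
    (hβ : β ≠ 0) (hexp : 1 / α = 1 / s + 1 / β) : ∃ Z : Matrix n n ℂ, Z.PosDef ∧
      tracePow (X * Z) s = tracePow (X * Y) α ∧ tracePow (Z⁻¹ * Y) β = tracePow (X * Y) α := by
  set P := X ^ (1 / 2 : ℝ) * Y * X ^ (1 / 2 : ℝ)
  have hP : P.PosDef := posDef_rpow_mul_mul_rpow hY hX _
  have hXY : tracePow (X * Y) α = tracePow P α := by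
    rw [tracePow_mul_comm, tracePow_mul_eq_tracePow_sandwich hX]
  have hinv : (X ^ (-(1 / 2) : ℝ) * P ^ (α / s) * X ^ (-(1 / 2) : ℝ))⁻¹ =
      X ^ (1 / 2 : ℝ) * P ^ (-(α / s)) * X ^ (1 / 2 : ℝ) := by
    rw [Matrix.mul_inv_rev, Matrix.mul_inv_rev, ← rpow_neg_of_posDef hX, ← rpow_neg_of_posDef hP,
      neg_neg, mul_assoc]
  refine ⟨X ^ (-(1 / 2) : ℝ) * P ^ (α / s) * X ^ (-(1 / 2) : ℝ),
    posDef_rpow_mul_mul_rpow (posDef_rpow hP _) hX _, ?_, ?_⟩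
  · rw [hXY, tracePow_mul_comm, tracePow_mul_eq_tracePow_sandwich hX]
    have hcancel : X ^ (1 / 2 : ℝ) * (X ^ (-(1 / 2) : ℝ) * P ^ (α / s) * X ^ (-(1 / 2) : ℝ)) *
        X ^ (1 / 2 : ℝ) = P ^ (α / s) := by
      rw [mul_assoc, mul_assoc, mul_assoc, rpow_neg_mul_rpow hX, mul_one, ← mul_assoc,
        rpow_mul_rpow_neg hX, one_mul]
    rw [hcancel, tracePow_rpow hP, div_mul_cancel₀ _ hs]
  · have hcycle : X ^ (1 / 2 : ℝ) * P ^ (-(α / s)) * X ^ (1 / 2 : ℝ) * Y =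
        X ^ (1 / 2 : ℝ) * (P ^ (-(α / s)) * X ^ (1 / 2 : ℝ) * Y) := by
      simp only [mul_assoc]
    have hpow : P ^ (-(α / s)) * P = P ^ (α / β) := by
      nth_rw 2 [← rpow_one_of_posDef hP]
      rw [rpow_mul_rpow hP]
      congr 1
      linarith [div_add_div_eq_one_of_one_div_eq hα hexp]
    rw [hinv, hcycle, tracePow_mul_comm, mul_assoc, mul_assoc, ← mul_assoc _ Y, hpow,
      tracePow_rpow hP, div_mul_cancel₀ _ hβ, hXY]

theorem exists_tracePow_mul_eq (hX : X.PosDef) (hZ : Z.PosDef) (hα : α ≠ 0) (hs : s ≠ 0)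
    (hβ : β ≠ 0) (hexp : 1 / α = 1 / s + 1 / β) : ∃ Y : Matrix n n ℂ, Y.PosDef ∧
      tracePow (X * Y) α = tracePow (X * Z) s ∧ tracePow (Z⁻¹ * Y) β = tracePow (X * Z) s := by
  set P := Z ^ (1 / 2 : ℝ) * X * Z ^ (1 / 2 : ℝ)
  have hP : P.PosDef := posDef_rpow_mul_mul_rpow hX hZ _
  have hXZ : tracePow (X * Z) s = tracePow P s := tracePow_mul_eq_tracePow_sandwich hZ X s
  refine ⟨Z ^ (1 / 2 : ℝ) * P ^ (s / β) * Z ^ (1 / 2 : ℝ),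
    posDef_rpow_mul_mul_rpow (posDef_rpow hP _) hZ _, ?_, ?_⟩
  · have hpow : P * P ^ (s / β) = P ^ (s / α) := by
      nth_rw 1 [← rpow_one_of_posDef hP]
      rw [rpow_mul_rpow hP]
      congr 1
      rw [div_eq_mul_one_div s α, hexp]
      field_simp
    rw [← mul_assoc, tracePow_mul_comm]
    simp only [← mul_assoc]
    rw [hpow, tracePow_rpow hP, div_mul_cancel₀ _ hα, hXZ]
  · have hcancel : Z ^ (-(1 / 2) : ℝ) * (Z ^ (1 / 2 : ℝ) * P ^ (s / β) * Z ^ (1 / 2 : ℝ)) *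
        Z ^ (-(1 / 2) : ℝ) = P ^ (s / β) := by
      rw [mul_assoc, mul_assoc, mul_assoc, rpow_mul_rpow_neg hZ, mul_one, ← mul_assoc,
        rpow_neg_mul_rpow hZ, one_mul]
    rw [tracePow_inv_mul hZ, hcancel, tracePow_rpow hP, div_mul_cancel₀ _ hβ, hXZ]

/-- Zhang's variational method: by Hölder's inequality, the functional is an infimum over `Z` of
sums of the two given concave functionals. -/
theorem concaveOn_tracePow_mul_of_concaveOn {E : Type*} [AddCommGroup E] [Module ℝ E] {S : Set E}
    {X Y : E → Matrix n n ℂ} (hS : Convex ℝ S) (hX : ∀ x ∈ S, (X x).PosDef)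
    (hY : ∀ x ∈ S, (Y x).PosDef) (hs : 0 < s) (hβ : 1 ≤ β) (hexp : 1 / α = 1 / s + 1 / β)
    (hXconc : ∀ Z : Matrix n n ℂ, Z.PosDef → ConcaveOn ℝ S fun x => tracePow (X x * Z) s)
    (hYconc : ∀ Z : Matrix n n ℂ, Z.PosDef → ConcaveOn ℝ S fun x => tracePow (Z * Y x) β) :
    ConcaveOn ℝ S fun x => tracePow (X x * Y x) α := by
  have hβ0 : 0 < β := one_pos.trans_le hβ
  have hα : 0 < α := one_div_pos.mp (hexp ▸ by positivity)
  refine concaveOn_of_attained_inf (S := posDefSet n) hS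
    (g := fun Z x => α / s * tracePow (X x * Z) s + α / β * tracePow (Z⁻¹ * Y x) β)
    (fun Z hZ => ((hXconc Z hZ).smul (div_pos hα hs).le).add
      ((hYconc Z⁻¹ (Matrix.PosDef.inv hZ)).smul (div_pos hα hβ0).le))
    (fun x hx Z hZ => tracePow_mul_le_mul_inv_mul (hX x hx) (hY x hx) hZ hs hβ hexp)
    fun x hx => ?_
  obtain ⟨Z, hZ, hXZ, hZY⟩ :=
    exists_tracePow_mul_inv_mul_eq (hX x hx) (hY x hx) hα.ne' hs.ne' hβ0.ne' hexp
  refine ⟨Z, hZ, le_of_eq ?_⟩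
  rw [hXZ, hZY, ← add_mul, div_add_div_eq_one_of_one_div_eq hα.ne' hexp, one_mul]

end Holder

section AndoConvexity

open scoped MatrixOrder
open Set

variable {n : Type*} [Fintype n] [DecidableEq n] {Z : Matrix n n ℂ} {p α : ℝ}

theorem convexOn_tracePow_rpow_mul_one_div (hZ : Z.PosDef) (hp : p ∈ Icc 1 2) :
    ConvexOn ℝ (posDefSet n) fun A => tracePow (A ^ p * Z) (1 / p) := by
  have hp0 : 0 < p := one_pos.trans_le hp.1
  have hando := convexOn_reTrace_rpow_mul_rpow_one_sub (Z ^ (1 / 2 : ℝ)) hp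
  simp only [(posDef_rpow hZ _).isHermitian.eq] at hando
  simp only [tracePow_mul_eq_tracePow_sandwich hZ]
  refine convexOn_tracePow_of_convexOn_reTrace_mul_rpow (convex_posDefSet n)
    (fun A hA => posDef_rpow_mul_mul_rpow (posDef_rpow hA p) hZ _)
    (one_div_pos.mpr hp0) ((div_le_one hp0).mpr hp.1) ?_
  simpa only [one_div_one_div] using hando

/-- By Hölder's inequality with exponents `1 / (1/p) = 1/α + 1/ρ`, the functional is a supremum over
`Y` of the convex functionals with exponent `1/p`. -/
theorem convexOn_tracePow_rpow_mul (hZ : Z.PosDef) (hp : p ∈ Icc 1 2) (hα : 1 / p ≤ α)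
    (hα₁ : α ≤ 1) : ConvexOn ℝ (posDefSet n) fun A => tracePow (A ^ p * Z) α := by
  rcases hα.eq_or_lt with rfl | hpα
  · exact convexOn_tracePow_rpow_mul_one_div hZ hp
  have hp0 : 0 < p := one_pos.trans_le hp.1
  have hα0 : 0 < α := (one_div_pos.mpr hp0).trans hpα
  have hgap : 0 < p - 1 / α := sub_pos.mpr ((one_div_lt hp0 hα0).mp hpα)
  set ρ := 1 / (p - 1 / α) with hρ_def
  have hρ : 1 ≤ ρ := one_le_one_div hgap (by linarith [one_le_one_div hα0 hα₁, hp.2])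
  have hρ0 : ρ ≠ 0 := (one_pos.trans_le hρ).ne'
  have hexp : 1 / (1 / p) = 1 / α + 1 / ρ := by
    rw [hρ_def, one_div_one_div, one_div_one_div]
    ring
  have hweights := div_add_div_eq_one_of_one_div_eq (one_div_pos.mpr hp0).ne' hexp
  have hscaled : ConvexOn ℝ (posDefSet n) fun A => 1 / p / α * tracePow (A ^ p * Z) α := by
    refine convexOn_of_attained_sup (S := posDefSet n) (convex_posDefSet n)
      (g := fun Y A => tracePow (A ^ p * Y) (1 / p) - 1 / p / ρ * tracePow (Z⁻¹ * Y) ρ)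
      (fun Y hY => (convexOn_tracePow_rpow_mul_one_div hY hp).sub
        (concaveOn_const _ (convex_posDefSet n)))
      (fun A hA Y hY => sub_le_iff_le_add.mpr
        (tracePow_mul_le_mul_inv_mul (posDef_rpow hA p) hY hZ hα0 hρ hexp)) fun A hA => ?_
    obtain ⟨Y, hY, hXY, hZY⟩ := exists_tracePow_mul_eq (posDef_rpow hA p) hZ
      (one_div_pos.mpr hp0).ne' hα0.ne' hρ0 hexp
    refine ⟨Y, hY, ?_⟩
    rw [hXY, hZY, eq_sub_of_add_eq hweights]
    linarith
  have hw : 0 < 1 / p / α := by positivity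
  simpa only [smul_eq_mul, inv_mul_cancel_left₀ hw.ne'] using hscaled.smul (inv_nonneg.mpr hw.le)

theorem convexOn_tracePow_conjTranspose_mul_rpow_mul {K W : Matrix n n ℂ}
    (hK : IsUnit K) (hW : W.PosDef) (hp : p ∈ Icc 1 2) (hα : 1 / p ≤ α) (hα₁ : α ≤ 1) :
    ConvexOn ℝ (posDefSet n) fun A => tracePow (Kᴴ * A ^ p * K * W) α := by
  have hZ : (K * W * Kᴴ).PosDef := by
    simpa only [conjTranspose_conjTranspose] using
      posDef_conjTranspose_mul_mul hW (L := Kᴴ) hK.star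
  refine (convexOn_tracePow_rpow_mul hZ hp hα hα₁).congr fun A _ => ?_
  beta_reduce
  rw [← mul_assoc, tracePow_mul_comm]
  simp only [mul_assoc]

end AndoConvexity

section SchattenDuality

open scoped MatrixOrder
open Set

variable {n : Type*} [Fintype n] {C Y : Matrix n n ℂ} {a : ℝ}

/-- The positive definite density matrices, over which the infimum in `Qinf` is taken. -/
def posDefDensities (n : Type*) [Fintype n] : Set (Matrix n n ℂ) :=
  {C | C.PosDef ∧ C.trace = 1}

theorem ofReal_reTrace (hC : C.IsHermitian) : (reTrace C : ℂ) = C.trace := by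
  rw [reTrace_apply, ← Complex.conj_eq_iff_re, starRingEnd_apply, ← Matrix.trace_conjTranspose,
    hC.eq]

variable [DecidableEq n]

/-- For a density matrix `C`, `Tr (Cᵃ Y)` is at most the Schatten norm of `Y` dual to that of
`Cᵃ`. -/
theorem reTrace_rpow_mul_le_tracePow_rpow [Nonempty n] (hC : C ∈ posDefDensities n)
    (hY : Y.PosDef) (ha : a ∈ Ioo 0 1) :
    reTrace (C ^ a * Y) ≤ tracePow Y (1 / (1 - a)) ^ (1 - a) := by
  have h1a : 0 < 1 - a := sub_pos.mpr ha.2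
  have hC₁ : reTrace C = 1 := by rw [reTrace_apply, hC.2, Complex.one_re]
  set β := 1 / (1 - a) with hβ_def
  have hβ : 1 ≤ β := one_le_one_div h1a (by linarith [ha.1])
  have hβ0 : 0 < β := one_pos.trans_le hβ
  have hT := tracePow_pos hY β
  set T := tracePow Y β
  have hl : 0 < T ^ (-(1 - a)) := Real.rpow_pos_of_pos hT _
  have hyoung := reTrace_mul_rpow_le (hY.smul hl) hC.1 hβ
  have hnormalized : (T ^ (-(1 - a))) ^ β * tracePow Y β = 1 := by
    rw [← Real.rpow_mul hT.le, hβ_def, neg_mul, mul_one_div_cancel h1a.ne', Real.rpow_neg_one,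
      inv_mul_cancel₀ hT.ne']
  rw [tracePow_smul hY hl, hnormalized, hC₁, smul_mul_assoc, map_smul, smul_eq_mul,
    reTrace_mul_comm, show 1 - 1 / β = a by rw [hβ_def, one_div_one_div]; ring] at hyoung
  have hbound : T ^ (-(1 - a)) * reTrace (C ^ a * Y) ≤ 1 :=
    le_of_mul_le_mul_left (by linarith) hβ0
  rwa [Real.rpow_neg hT.le, inv_mul_le_iff₀ (Real.rpow_pos_of_pos hT _), mul_one] at hbound

theorem exists_reTrace_rpow_mul_eq_tracePow_rpow [Nonempty n] (hY : Y.PosDef) (ha : a < 1) :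
    ∃ C ∈ posDefDensities n, reTrace (C ^ a * Y) = tracePow Y (1 / (1 - a)) ^ (1 - a) := by
  have h1a : 1 - a ≠ 0 := (sub_pos.mpr ha).ne'
  set β := 1 / (1 - a) with hβ_def
  have hT := tracePow_pos hY β
  set T := tracePow Y β
  have hTY : (T⁻¹ • Y ^ β).PosDef := (posDef_rpow hY β).smul (inv_pos.mpr hT)
  refine ⟨T⁻¹ • Y ^ β, ⟨hTY, ?_⟩, ?_⟩
  · rw [← ofReal_reTrace hTY.isHermitian, map_smul, smul_eq_mul, ← tracePow_eq_reTrace hY,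
      inv_mul_cancel₀ hT.ne', Complex.ofReal_one]
  · have hpow : Y ^ (β * a) * Y = Y ^ β := by
      nth_rw 2 [← rpow_one_of_posDef hY]
      rw [rpow_mul_rpow hY, show β * a + 1 = β by rw [hβ_def]; field_simp; ring]
    rw [smul_rpow_of_posDef (posDef_rpow hY β) (inv_pos.mpr hT), smul_mul_assoc, map_smul,
      smul_eq_mul, rpow_rpow_of_posDef hY, hpow, ← tracePow_eq_reTrace hY, Real.inv_rpow hT.le,
      ← Real.rpow_neg hT.le, sub_eq_neg_add, Real.rpow_add hT, Real.rpow_one]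

end SchattenDuality

section PartialTrace

open scoped MatrixOrder
open Set

variable {m n : Type*} [Fintype m] [Fintype n] {X : Matrix (m × n) (m × n) ℂ}

theorem ptraceFst_eq_sum_submatrix (X : Matrix (m × n) (m × n) ℂ) :
    ptraceFst X = ∑ i, X.submatrix (Prod.mk i) (Prod.mk i) := by
  ext j j'
  simp [ptraceFst, Matrix.sum_apply]

theorem posDef_ptraceFst [Nonempty m] (hX : X.PosDef) : (ptraceFst X).PosDef := by
  rw [ptraceFst_eq_sum_submatrix]
  exact Matrix.posDef_sum Finset.univ_nonempty fun i _ => hX.submatrix (Prod.mk_right_injective i)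

theorem reTrace_ptraceFst (X : Matrix (m × n) (m × n) ℂ) : reTrace (ptraceFst X) = reTrace X := by
  simp only [reTrace_apply, Matrix.trace, Matrix.diag, ptraceFst, Matrix.of_apply,
    Fintype.sum_prod_type_right]

variable [DecidableEq m] [DecidableEq n]

theorem ptraceFst_mul_oneKroneckerHom (X : Matrix (m × n) (m × n) ℂ) (Y : Matrix n n ℂ) :
    ptraceFst (X * oneKroneckerHom m n Y) = ptraceFst X * Y := by
  ext j j'
  simp [oneKroneckerHom_apply, ptraceFst, Matrix.mul_apply, Fintype.sum_prod_type_right,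
    Matrix.one_apply, Finset.sum_mul, Finset.sum_comm (s := (Finset.univ : Finset n))]

theorem reTrace_ptraceFst_mul (X : Matrix (m × n) (m × n) ℂ) (Y : Matrix n n ℂ) :
    reTrace (ptraceFst X * Y) = reTrace (X * oneKroneckerHom m n Y) := by
  rw [← ptraceFst_mul_oneKroneckerHom, reTrace_ptraceFst]

variable {W : Matrix (m × n) (m × n) ℂ} {Z : Matrix n n ℂ} {b c : ℝ}

/-- `Tr₁ (W^{1/2} Vᶜ W^{1/2})`, the matrix on the second factor that represents the functional
`Y ↦ Tr (W^{1/2} (1 ⊗ Y) W^{1/2} Vᶜ)`. -/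
noncomputable def ptraceSandwichRpow (W V : Matrix (m × n) (m × n) ℂ) (c : ℝ) : Matrix n n ℂ :=
  ptraceFst (W ^ (1 / 2 : ℝ) * V ^ c * W ^ (1 / 2 : ℝ))

theorem posDef_ptraceSandwichRpow [Nonempty m] {V : Matrix (m × n) (m × n) ℂ} (hW : W.PosDef)
    (hV : V.PosDef) (c : ℝ) : (ptraceSandwichRpow W V c).PosDef :=
  posDef_ptraceFst (posDef_rpow_mul_mul_rpow (posDef_rpow hV c) hW _)

theorem concaveOn_tracePow_mul_ptraceSandwichRpow [Nonempty m] (hW : W.PosDef) (hZ : Z.PosDef)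
    (hc : c ∈ Ioo 0 1) :
    ConcaveOn ℝ (posDefSet (m × n)) fun V => tracePow (Z * ptraceSandwichRpow W V c) (1 / c) := by
  have hlieb := concaveOn_reTrace_rpow_mul_rpow_one_sub
    (W ^ (1 / 2 : ℝ) * oneKroneckerHom m n (Z ^ (1 / 2 : ℝ))) hc
  have hamp : ConcaveOn ℝ (posDefSet (m × n) ×ˢ posDefSet n) fun P => reTrace
      ((W ^ (1 / 2 : ℝ) * oneKroneckerHom m n (Z ^ (1 / 2 : ℝ)))ᴴ * P.1 ^ c *
        (W ^ (1 / 2 : ℝ) * oneKroneckerHom m n (Z ^ (1 / 2 : ℝ))) *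
        oneKroneckerHom m n P.2 ^ (1 - c)) :=
    (hlieb.comp_linearMap (LinearMap.id.prodMap
      (oneKroneckerHom m n).toAlgHom.toLinearMap)).subset
      (fun P hP => ⟨hP.1, posDef_oneKroneckerHom hP.2⟩)
      ((convex_posDefSet _).prod (convex_posDefSet _))
  simp only [tracePow_mul_comm Z, tracePow_mul_eq_tracePow_sandwich hZ]
  refine concaveOn_tracePow_of_concaveOn_reTrace_mul_rpow (convex_posDefSet _)
    (fun V hV => posDef_rpow_mul_mul_rpow (posDef_ptraceSandwichRpow hW hV c) hZ _)
    (one_le_one_div hc.1 hc.2.le) (hamp.congr fun P hP => ?_)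
  beta_reduce
  have hcycle (X Y T : Matrix n n ℂ) : reTrace (X * Y * X * T) = reTrace (Y * (X * T * X)) := by
    rw [mul_assoc, mul_assoc, reTrace_mul_comm, mul_assoc]
  rw [← oneKroneckerHom_rpow hP.2, Matrix.conjTranspose_mul, (posDef_rpow hW _).isHermitian.eq,
    (posDef_oneKroneckerHom (posDef_rpow hZ _)).isHermitian.eq, one_div_one_div, hcycle,
    ptraceSandwichRpow, reTrace_ptraceFst_mul, mul_assoc, mul_assoc, mul_assoc, reTrace_mul_comm]
  simp only [map_mul, mul_assoc]

/-- By Zhang's method, from Epstein's theorem in `B` and Lieb's theorem in `V`. -/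
theorem concaveOn_tracePow_rpow_mul_ptraceSandwichRpow [Nonempty m] (hW : W.PosDef)
    (hb : b ∈ Ioo 0 1) (hc : c ∈ Ioo 0 1) :
    ConcaveOn ℝ (posDefSet n ×ˢ posDefSet (m × n)) fun P =>
      tracePow (P.1 ^ b * ptraceSandwichRpow W P.2 c) (1 / (b + c)) := by
  have hconv : Convex ℝ (posDefSet n ×ˢ posDefSet (m × n)) :=
    (convex_posDefSet n).prod (convex_posDefSet _)
  refine concaveOn_tracePow_mul_of_concaveOn hconv
    (fun P hP => posDef_rpow hP.1 b) (fun P hP => posDef_ptraceSandwichRpow hW hP.2 c)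
    (one_div_pos.mpr hb.1) (one_le_one_div hc.1 hc.2.le) (by simp only [one_div_one_div])
    (fun Z hZ => ?_) fun Z hZ => ?_
  · exact ((concaveOn_tracePow_rpow_mul hZ hb).comp_linearMap (LinearMap.fst ℝ _ _)).subset
      (fun P hP => hP.1) hconv
  · exact ((concaveOn_tracePow_mul_ptraceSandwichRpow hW hZ hc).comp_linearMap
      (LinearMap.snd ℝ _ _)).subset (fun P hP => hP.2) hconv

end PartialTrace

section AmpKernel

open scoped MatrixOrder
open Set

variable {m n : Type*} [Fintype m] [DecidableEq m] [Fintype n] [DecidableEq n]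
  {W V : Matrix (m × n) (m × n) ℂ} {B C N : Matrix n n ℂ} {a b : ℝ}

/-- `1 ⊗ B^{b/2} Cᵃ B^{b/2}`. For `a = r` and `b = q` this is the factor of `Qinf` between `K` and
`Kᴴ`; its inverse is obtained by changing the sign of both exponents. -/
noncomputable def ampKernel (m : Type*) [Fintype m] [DecidableEq m] (a b : ℝ)
    (B C : Matrix n n ℂ) : Matrix (m × n) (m × n) ℂ :=
  oneKroneckerHom m n (B ^ (b / 2) * C ^ a * B ^ (b / 2))

theorem posDef_ampKernel (a b : ℝ) (hB : B.PosDef) (hC : C.PosDef) :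
    (ampKernel m a b B C).PosDef :=
  posDef_oneKroneckerHom (posDef_rpow_mul_mul_rpow (posDef_rpow hC a) hB _)

theorem ampKernel_inv (a b : ℝ) (hB : B.PosDef) (hC : C.PosDef) :
    (ampKernel m a b B C)⁻¹ = ampKernel m (-a) (-b) B C := by
  refine Matrix.inv_eq_right_inv ?_
  rw [ampKernel, ampKernel, ← map_mul, neg_div, mul_assoc (B ^ (b / 2) * C ^ a),
    mul_assoc _ (C ^ (-a)), ← mul_assoc (B ^ (b / 2)) (B ^ (-(b / 2))), rpow_mul_rpow_neg hB,
    one_mul, ← mul_assoc, mul_assoc (B ^ (b / 2)), rpow_mul_rpow_neg hC, mul_one,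
    rpow_mul_rpow_neg hB, map_one]

theorem continuousOn_ampKernel (a b : ℝ) (B : Matrix n n ℂ) :
    ContinuousOn (ampKernel m a b B) (posDefSet n) :=
  continuous_oneKroneckerHom.comp_continuousOn <|
    (continuousOn_const.mul (continuousOn_rpow_posDefSet a)).mul continuousOn_const

theorem concaveOn_tracePow_rpow_mul_one_div_add (hN : N.PosDef) (ha : a ∈ Ioo 0 1)
    (hb : b ∈ Ioo 0 1) :
    ConcaveOn ℝ (posDefSet n) fun C => tracePow (C ^ a * N) (1 / (a + b)) :=
  concaveOn_tracePow_mul_of_concaveOn (Y := fun _ => N) (convex_posDefSet n)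
    (fun _ hC => posDef_rpow hC a) (fun _ _ => hN) (one_div_pos.mpr ha.1)
    (one_le_one_div hb.1 hb.2.le) (by simp only [one_div_one_div])
    (fun _ hZ => concaveOn_tracePow_rpow_mul hZ ha)
    fun _ _ => concaveOn_const _ (convex_posDefSet n)

theorem concaveOn_tracePow_mul_ampKernel (hW : W.PosDef) (hB : B.PosDef) (ha : a ∈ Ioo 0 1)
    (hb : b ∈ Ioo 0 1) :
    ConcaveOn ℝ (posDefSet n) fun C => tracePow (W * ampKernel m a b B C) (1 / (a + b)) := by
  have hB' : (oneKroneckerHom m n (B ^ (b / 2))).PosDef :=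
    posDef_oneKroneckerHom (posDef_rpow hB _)
  have hN : (oneKroneckerHom m n (B ^ (b / 2)) * W * oneKroneckerHom m n (B ^ (b / 2))).PosDef := by
    simpa only [hB'.isHermitian.eq] using posDef_conjTranspose_mul_mul hW hB'.isUnit
  refine ConcaveOn.congr (((concaveOn_tracePow_rpow_mul_one_div_add hN ha hb).comp_linearMap
    (oneKroneckerHom m n).toAlgHom.toLinearMap).subset (fun C hC => posDef_oneKroneckerHom hC)
    (convex_posDefSet n)) fun C hC => ?_
  change tracePow (oneKroneckerHom m n C ^ a * _) _ = _
  rw [← oneKroneckerHom_rpow hC, ampKernel, map_mul, map_mul, tracePow_mul_comm, mul_assoc,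
    mul_assoc, tracePow_mul_comm]
  simp only [mul_assoc]

theorem reTrace_sandwich_ampKernel_mul_rpow (W V : Matrix (m × n) (m × n) ℂ) (B C : Matrix n n ℂ)
    (a b c : ℝ) :
    reTrace (W ^ (1 / 2 : ℝ) * ampKernel m a b B C * W ^ (1 / 2 : ℝ) * V ^ c) =
      reTrace (C ^ a * (B ^ (b / 2) * ptraceSandwichRpow W V c * B ^ (b / 2))) := by
  have hright : reTrace (C ^ a * (B ^ (b / 2) * ptraceSandwichRpow W V c * B ^ (b / 2))) =
      reTrace (ptraceSandwichRpow W V c * (B ^ (b / 2) * C ^ a * B ^ (b / 2))) := by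
    rw [← mul_assoc, ← mul_assoc, mul_assoc _ (ptraceSandwichRpow W V c), reTrace_mul_comm]
    simp only [mul_assoc]
  rw [hright, ptraceSandwichRpow, reTrace_ptraceFst_mul, ← ampKernel, mul_assoc, mul_assoc,
    reTrace_mul_comm, mul_assoc, reTrace_mul_comm]

/-- The maximum of `Tr (W^{1/2} (1 ⊗ B^{b/2} Cᵃ B^{b/2}) W^{1/2} V^{1-a-b})` over the positive
definite densities `C`, as a Schatten norm. -/
noncomputable def densityMax (a b : ℝ) (W V : Matrix (m × n) (m × n) ℂ) (B : Matrix n n ℂ) : ℝ :=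
  tracePow (B ^ b * ptraceSandwichRpow W V (1 - a - b)) (1 / (1 - a)) ^ (1 - a)

theorem tracePow_rpow_mul_eq (hB : B.PosDef) (N : Matrix n n ℂ) (t : ℝ) :
    tracePow (B ^ b * N) t = tracePow (B ^ (b / 2) * N * B ^ (b / 2)) t := by
  rw [tracePow_mul_comm (B ^ (b / 2) * N), ← mul_assoc, rpow_mul_rpow hB, add_halves]

theorem reTrace_sandwich_ampKernel_mul_rpow_le [Nonempty m] [Nonempty n] (hW : W.PosDef)
    (hV : V.PosDef) (hB : B.PosDef) (hC : C ∈ posDefDensities n) (ha : a ∈ Ioo 0 1) (b : ℝ) :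
    reTrace (W ^ (1 / 2 : ℝ) * ampKernel m a b B C * W ^ (1 / 2 : ℝ) * V ^ (1 - a - b)) ≤
      densityMax a b W V B := by
  rw [reTrace_sandwich_ampKernel_mul_rpow, densityMax, tracePow_rpow_mul_eq hB]
  exact reTrace_rpow_mul_le_tracePow_rpow hC
    (posDef_rpow_mul_mul_rpow (posDef_ptraceSandwichRpow hW hV _) hB _) ha

theorem exists_reTrace_sandwich_ampKernel_mul_rpow_eq [Nonempty m] [Nonempty n] (hW : W.PosDef)
    (hV : V.PosDef) (hB : B.PosDef) (ha : a < 1) (b : ℝ) : ∃ C ∈ posDefDensities n,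
    reTrace (W ^ (1 / 2 : ℝ) * ampKernel m a b B C * W ^ (1 / 2 : ℝ) * V ^ (1 - a - b)) =
      densityMax a b W V B := by
  simp only [reTrace_sandwich_ampKernel_mul_rpow, densityMax, tracePow_rpow_mul_eq hB]
  exact exists_reTrace_rpow_mul_eq_tracePow_rpow
    (posDef_rpow_mul_mul_rpow (posDef_ptraceSandwichRpow hW hV _) hB _) ha

theorem concaveOn_densityMax [Nonempty m] [Nonempty n] (hW : W.PosDef) (ha : 0 < a) (hb : 0 < b)
    (hab : a + b < 1) :
    ConcaveOn ℝ (posDefSet n ×ˢ posDefSet (m × n)) fun P => densityMax a b W P.2 P.1 := by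
  have htrace := concaveOn_tracePow_rpow_mul_ptraceSandwichRpow (n := n) hW (b := b)
    (c := 1 - a - b) ⟨hb, by linarith⟩ ⟨by linarith, by linarith⟩
  rw [show b + (1 - a - b) = 1 - a by ring] at htrace
  refine ⟨htrace.1, fun P hP Q hQ x y hx hy hxy => ?_⟩
  have hpos (P) (hP : P ∈ posDefSet n ×ˢ posDefSet (m × n)) :
      0 ≤ tracePow (P.1 ^ b * ptraceSandwichRpow W P.2 (1 - a - b)) (1 / (1 - a)) :=
    (tracePow_mul_pos (posDef_rpow hP.1 b) (posDef_ptraceSandwichRpow hW hP.2 _) _).le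
  refine ((Real.concaveOn_rpow (by linarith) (by linarith)).2 (hpos P hP) (hpos Q hQ)
    hx hy hxy).trans (Real.rpow_le_rpow ?_ (htrace.2 hP hQ hx hy hxy) (by linarith))
  exact add_nonneg (mul_nonneg hx (hpos P hP)) (mul_nonneg hy (hpos Q hQ))

theorem tracePow_mul_ampKernel_eq (hW : W.PosDef) (a b : ℝ) (B C : Matrix n n ℂ) (t : ℝ) :
    tracePow (W * ampKernel m a b B C) t =
      tracePow (W ^ (1 / 2 : ℝ) * ampKernel m a b B C * W ^ (1 / 2 : ℝ)) t := by
  rw [tracePow_mul_comm, tracePow_mul_eq_tracePow_sandwich hW]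

/-- Young's lower bound for `max_C Tr (W (1 ⊗ B^{b/2} Cᵃ B^{b/2}))^β`, `β = 1/(a+b)`, at the trial
matrix `V`. -/
noncomputable def youngDensityMax (a b : ℝ) (W V : Matrix (m × n) (m × n) ℂ) (B : Matrix n n ℂ) :
    ℝ :=
  1 / (a + b) * densityMax a b W V B - (1 / (a + b) - 1) * reTrace V

theorem concaveOn_youngDensityMax [Nonempty m] [Nonempty n] (hW : W.PosDef) (ha : 0 < a)
    (hb : 0 < b) (hab : a + b < 1) :
    ConcaveOn ℝ (posDefSet n ×ˢ posDefSet (m × n)) fun P => youngDensityMax a b W P.2 P.1 := by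
  have hab0 : 0 < a + b := add_pos ha hb
  have hdens := concaveOn_densityMax (n := n) hW ha hb hab
  exact (hdens.smul (one_div_pos.mpr hab0).le).sub
    ((LinearMap.convexOn (reTrace ∘ₗ LinearMap.snd ℝ _ _) hdens.1).smul
      (sub_nonneg.mpr (one_le_one_div hab0 hab.le)))

theorem exists_tracePow_mul_ampKernel_le_youngDensityMax [Nonempty m] [Nonempty n] (hW : W.PosDef)
    (hB : B.PosDef) (hC : C ∈ posDefDensities n) (ha : a ∈ Ioo 0 1) (hab : 0 < a + b) :
    ∃ V : Matrix (m × n) (m × n) ℂ, V.PosDef ∧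
      tracePow (W * ampKernel m a b B C) (1 / (a + b)) ≤ youngDensityMax a b W V B := by
  have hP := posDef_rpow_mul_mul_rpow (posDef_ampKernel (m := m) a b hB hC.1) hW (1 / 2)
  have hβ := one_div_pos.mpr hab
  have hV := posDef_rpow hP (1 / (a + b))
  have hmax := reTrace_sandwich_ampKernel_mul_rpow_le hW hV hB hC ha b
  rw [show 1 - a - b = 1 - 1 / (1 / (a + b)) by rw [one_div_one_div]; ring,
    reTrace_mul_rpow_rpow_self hP hβ.ne'] at hmax
  refine ⟨_, hV, ?_⟩
  rw [tracePow_mul_ampKernel_eq hW, youngDensityMax, ← tracePow_eq_reTrace hP]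
  linarith [mul_le_mul_of_nonneg_left hmax hβ.le]

theorem exists_youngDensityMax_le_tracePow_mul_ampKernel [Nonempty m] [Nonempty n] (hW : W.PosDef)
    (hV : V.PosDef) (hB : B.PosDef) (ha : a < 1) (hab : 0 < a + b) (hab₁ : a + b ≤ 1) :
    ∃ C ∈ posDefDensities n,
      youngDensityMax a b W V B ≤ tracePow (W * ampKernel m a b B C) (1 / (a + b)) := by
  obtain ⟨C, hC, hmax⟩ := exists_reTrace_sandwich_ampKernel_mul_rpow_eq hW hV hB ha b
  refine ⟨C, hC, ?_⟩
  have hyoung := reTrace_mul_rpow_le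
    (posDef_rpow_mul_mul_rpow (posDef_ampKernel (m := m) a b hB hC.1) hW (1 / 2)) hV
    (one_le_one_div hab hab₁)
  rw [one_div_one_div, ← sub_sub, hmax, ← tracePow_mul_ampKernel_eq hW] at hyoung
  exact sub_le_iff_le_add.mpr hyoung

/-- The supremum of `Tr (W (1 ⊗ B^{b/2} Cᵃ B^{b/2}))^{1/(a+b)}` over densities `C` is concave
in `B`. -/
theorem exists_mem_posDefDensities_le_tracePow_mul_ampKernel [Nonempty m] [Nonempty n]
    (hW : W.PosDef) (ha : 0 < a) (hb : 0 < b) (hab : a + b < 1) {B₀ B₁ C₀ C₁ : Matrix n n ℂ}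
    (hB₀ : B₀.PosDef) (hB₁ : B₁.PosDef) (hC₀ : C₀ ∈ posDefDensities n)
    (hC₁ : C₁ ∈ posDefDensities n) {x y : ℝ} (hx : 0 ≤ x) (hy : 0 ≤ y) (hxy : x + y = 1) :
    ∃ C ∈ posDefDensities n,
      x * tracePow (W * ampKernel m a b B₀ C₀) (1 / (a + b)) +
        y * tracePow (W * ampKernel m a b B₁ C₁) (1 / (a + b)) ≤
      tracePow (W * ampKernel m a b (x • B₀ + y • B₁) C) (1 / (a + b)) := by
  have ha₁ : a ∈ Ioo 0 1 := ⟨ha, by linarith⟩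
  have hab0 : 0 < a + b := add_pos ha hb
  obtain ⟨V₀, hV₀, hle₀⟩ := exists_tracePow_mul_ampKernel_le_youngDensityMax hW hB₀ hC₀ ha₁ hab0
  obtain ⟨V₁, hV₁, hle₁⟩ := exists_tracePow_mul_ampKernel_le_youngDensityMax hW hB₁ hC₁ ha₁ hab0
  obtain ⟨C, hC, hle⟩ := exists_youngDensityMax_le_tracePow_mul_ampKernel hW
    (convex_posDefSet _ hV₀ hV₁ hx hy hxy) (convex_posDefSet n hB₀ hB₁ hx hy hxy) ha₁.2 hab0 hab.le
  refine ⟨C, hC, le_trans ?_ hle⟩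
  calc _ ≤ x * youngDensityMax a b W V₀ B₀ + y * youngDensityMax a b W V₁ B₁ := by gcongr
    _ ≤ youngDensityMax a b W (x • V₀ + y • V₁) (x • B₀ + y • B₁) :=
      (concaveOn_youngDensityMax hW ha hb hab).2 (x := (B₀, V₀)) (y := (B₁, V₁))
        ⟨hB₀, hV₀⟩ ⟨hB₁, hV₁⟩ hx hy hxy

end AmpKernel

section DensityMatrices

theorem mul_le_apply_homothety_of_concaveOn {E : Type*} [AddCommGroup E] [Module ℝ E] {S : Set E}
    {f : E → ℝ} (hf : ConcaveOn ℝ S f) {c x : E} (hc : c ∈ S) (hfc : 0 ≤ f c) (hx : x ∈ S) {l : ℝ}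
    (hl₀ : 0 ≤ l) (hl₁ : l ≤ 1) : l * f x ≤ f (AffineMap.homothety c l x) := by
  rw [AffineMap.homothety_eq_lineMap, AffineMap.lineMap_apply_module]
  have hconc := hf.2 hc hx (sub_nonneg.mpr hl₁) hl₀ (sub_add_cancel 1 l)
  simp only [smul_eq_mul] at hconc
  linarith [mul_nonneg (sub_nonneg.mpr hl₁) hfc]

variable {n : Type*} [Fintype n]

open scoped Matrix.Norms.Frobenius in
theorem trace_conjTranspose_mul_self (G : Matrix n n ℂ) :
    (Gᴴ * G).trace = ((‖G‖ ^ 2 : ℝ) : ℂ) := by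
  rw [frobenius_norm_def, ← Real.sqrt_eq_rpow, Real.sq_sqrt (by positivity), Finset.sum_comm]
  simp [trace, mul_apply, Complex.conj_mul']

variable [DecidableEq n]

theorem convex_setOf_isDensity : Convex ℝ {D : Matrix n n ℂ | IsDensity D} := by
  rintro D₀ ⟨hD₀, htr₀⟩ D₁ ⟨hD₁, htr₁⟩ x y hx hy hxy
  refine ⟨(hD₀.smul hx).add (hD₁.smul hy), ?_⟩
  rw [trace_add, trace_smul, trace_smul, htr₀, htr₁, ← add_smul, hxy, one_smul]

open scoped Matrix.Norms.Frobenius MatrixOrder in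
theorem setOf_isDensity_eq_image_sphere :
    {D : Matrix n n ℂ | IsDensity D} = (fun G => Gᴴ * G) '' Metric.sphere (0 : Matrix n n ℂ) 1 := by
  have hsphere (G : Matrix n n ℂ) : G ∈ Metric.sphere 0 1 ↔ (Gᴴ * G).trace = 1 := by
    rw [trace_conjTranspose_mul_self, mem_sphere_zero_iff_norm, Complex.ofReal_eq_one,
      pow_eq_one_iff_of_nonneg (norm_nonneg G) two_ne_zero]
  ext D
  constructor
  · rintro ⟨hD, htr⟩
    obtain ⟨G, rfl⟩ := CStarAlgebra.nonneg_iff_eq_star_mul_self.mp hD.nonneg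
    exact ⟨G, (hsphere G).mpr htr, rfl⟩
  · rintro ⟨G, hG, rfl⟩
    exact ⟨posSemidef_conjTranspose_mul_self G, (hsphere G).mp hG⟩

open scoped Matrix.Norms.Frobenius in
theorem isCompact_setOf_isDensity : IsCompact {D : Matrix n n ℂ | IsDensity D} := by
  rw [setOf_isDensity_eq_image_sphere]
  exact (isCompact_sphere 0 1).image
    (continuous_id.matrix_conjTranspose.matrix_mul continuous_id)

/-- The maximally mixed state `I / dim`. Mixing it into a density matrix makes the latter positive
definite. -/
noncomputable def maximallyMixed (n : Type*) [Fintype n] [DecidableEq n] : Matrix n n ℂ :=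
  (Fintype.card n : ℝ)⁻¹ • 1

theorem maximallyMixed_mem_posDefDensities [Nonempty n] :
    maximallyMixed n ∈ posDefDensities n := by
  refine ⟨PosDef.one.smul (inv_pos.mpr (Nat.cast_pos.mpr Fintype.card_pos)), ?_⟩
  simp [maximallyMixed, trace_smul, trace_one]

theorem homothety_maximallyMixed_mem_posDefDensities [Nonempty n] {D : Matrix n n ℂ}
    (hD : IsDensity D) {l : ℝ} (hl₀ : 0 ≤ l) (hl₁ : l < 1) :
    AffineMap.homothety (maximallyMixed n) l D ∈ posDefDensities n := by
  obtain ⟨hc, htr⟩ := maximallyMixed_mem_posDefDensities (n := n)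
  rw [AffineMap.homothety_eq_lineMap, AffineMap.lineMap_apply_module]
  refine ⟨(hc.smul (sub_pos.mpr hl₁)).add_posSemidef (hD.1.smul hl₀), ?_⟩
  rw [trace_add, trace_smul, trace_smul, htr, hD.2, ← add_smul, sub_add_cancel, one_smul]

end DensityMatrices

section Duality

open scoped MatrixOrder

variable {n : Type*} [Fintype n] [DecidableEq n] {X E W : Matrix n n ℂ} {α β s l R : ℝ}

theorem sub_le_tracePow_mul_inv (hX : X.PosDef) (hE : E.PosDef) (hW : W.PosDef) (hα : 0 < α)
    (hs : 0 < s) (hβ : 1 ≤ β) (hexp : 1 / α = 1 / s + 1 / β) :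
    s / α * tracePow (X * W) α - s / β * tracePow (W * E) β ≤ tracePow (X * E⁻¹) s := by
  have hholder := tracePow_mul_le_mul_inv_mul hX hW hE.inv hs hβ hexp
  rw [nonsing_inv_nonsing_inv _ ((isUnit_iff_isUnit_det _).mp hE.isUnit),
    tracePow_mul_comm E] at hholder
  have hmul := mul_le_mul_of_nonneg_left hholder (div_pos hs hα).le
  rw [mul_add, ← mul_assoc, ← mul_assoc, div_mul_div_cancel₀ hα.ne', div_self hs.ne', one_mul,
    div_mul_div_cancel₀ hα.ne'] at hmul
  linarith

theorem tracePow_mul_inv_le_of_forall_sub_le (hX : X.PosDef) (hE : E.PosDef) (hα : α ≠ 0)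
    (hs : s ≠ 0) (hβ : β ≠ 0) (hexp : 1 / α = 1 / s + 1 / β)
    (h : ∀ W : Matrix n n ℂ, W.PosDef →
      s / α * tracePow (X * W) α - s / β * tracePow (W * E) β ≤ R) :
    tracePow (X * E⁻¹) s ≤ R := by
  obtain ⟨W, hW, hα_eq, hβ_eq⟩ := exists_tracePow_mul_eq hX hE.inv hα hs hβ hexp
  have hWE := h W hW
  rw [nonsing_inv_nonsing_inv _ ((isUnit_iff_isUnit_det _).mp hE.isUnit),
    tracePow_mul_comm E] at hβ_eq
  have hexp' : s / α - s / β = 1 := by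
    rw [← mul_one_div s α, hexp]
    field_simp
    ring
  rwa [hα_eq, hβ_eq, ← sub_mul, hexp', one_mul] at hWE

theorem rpow_mul_tracePow_mul_inv_le_of_forall_sub_le (hX : X.PosDef) (hE : E.PosDef)
    (hα : α ≠ 0) (hs : s ≠ 0) (hβ : β ≠ 0) (hexp : 1 / α = 1 / s + 1 / β) (hl : 0 < l)
    (h : ∀ W : Matrix n n ℂ, W.PosDef →
      s / α * tracePow (X * W) α - s / β * (l⁻¹ * tracePow (W * E) β) ≤ R) :
    l ^ (s / β) * tracePow (X * E⁻¹) s ≤ R := by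
  have hc : 0 < l ^ (1 / β) := Real.rpow_pos_of_pos hl _
  have hinv : ((l ^ (1 / β))⁻¹ • E)⁻¹ = l ^ (1 / β) • E⁻¹ := by
    refine inv_eq_right_inv ?_
    rw [smul_mul_smul_comm, mul_nonsing_inv _ ((isUnit_iff_isUnit_det _).mp hE.isUnit),
      inv_mul_cancel₀ hc.ne', one_smul]
  have hscaled := tracePow_mul_inv_le_of_forall_sub_le hX (hE.smul (inv_pos.mpr hc)) hα hs hβ hexp
    (R := R) fun W hW => by
      rw [tracePow_mul_smul hW hE (inv_pos.mpr hc), ← Real.rpow_neg hl.le, ← Real.rpow_mul hl.le,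
        neg_mul, one_div_mul_cancel hβ, Real.rpow_neg_one]
      exact h W hW
  rwa [hinv, tracePow_mul_smul hX hE.inv hc, ← Real.rpow_mul hl.le, one_div_mul_eq_div] at hscaled

end Duality

section Minimax

open scoped MatrixOrder
open Set

variable {m n : Type*} [Fintype m] [DecidableEq m] [Fintype n] [DecidableEq n]
  {X W : Matrix (m × n) (m × n) ℂ} {B : Matrix n n ℂ} {a b α l u v R : ℝ}

theorem concaveOn_tracePow_mul_ampKernel_homothety [Nonempty n] (hW : W.PosDef) (hB : B.PosDef)
    (ha : a ∈ Ioo 0 1) (hb : b ∈ Ioo 0 1) (hl₀ : 0 ≤ l) (hl₁ : l < 1) :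
    ConcaveOn ℝ {D : Matrix n n ℂ | IsDensity D} fun D =>
      tracePow (W * ampKernel m a b B (AffineMap.homothety (maximallyMixed n) l D))
        (1 / (a + b)) :=
  ((concaveOn_tracePow_mul_ampKernel hW hB ha hb).comp_affineMap _).subset
    (fun _ hD => (homothety_maximallyMixed_mem_posDefDensities hD hl₀ hl₁).1)
    convex_setOf_isDensity

theorem continuousOn_tracePow_mul_ampKernel_homothety [Nonempty n] (hW : W.PosDef)
    (hB : B.PosDef) (a b t : ℝ) (hl₀ : 0 ≤ l) (hl₁ : l < 1) :
    ContinuousOn (fun D : Matrix n n ℂ =>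
      tracePow (W * ampKernel m a b B (AffineMap.homothety (maximallyMixed n) l D)) t)
      {D | IsDensity D} := by
  have hmix (D : Matrix n n ℂ) (hD : IsDensity D) :
      (AffineMap.homothety (maximallyMixed n) l D).PosDef :=
    (homothety_maximallyMixed_mem_posDefDensities hD hl₀ hl₁).1
  simp only [tracePow_mul_comm W]
  exact (continuousOn_tracePow_mul hW t).comp ((continuousOn_ampKernel a b B).comp
    (AffineMap.homothety_continuous _ l).continuousOn hmix)
    fun D hD => posDef_ampKernel a b hB (hmix D hD)

/-- The minimax exchange. It takes place on the compact set of all density matrices, each of them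
mixed with the maximally mixed state to stay positive definite; this costs the factor `l⁻¹`. -/
theorem exists_mem_posDefDensities_forall_sub_le [Nonempty m] [Nonempty n] (hX : X.PosDef)
    (hB : B.PosDef) (ha : 0 < a) (hb : 0 < b) (hab : a + b < 1) (hα : 0 < α) (hα₁ : α ≤ 1)
    (hu : 0 ≤ u) (hv : 0 ≤ v) (hl₀ : 0 < l) (hl₁ : l < 1)
    (h : ∀ W : Matrix (m × n) (m × n) ℂ, W.PosDef → ∃ C ∈ posDefDensities n,
      u * tracePow (X * W) α - v * tracePow (W * ampKernel m a b B C) (1 / (a + b)) ≤ R) :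
    ∃ C ∈ posDefDensities n, ∀ W : Matrix (m × n) (m × n) ℂ, W.PosDef →
      u * tracePow (X * W) α - v * (l⁻¹ * tracePow (W * ampKernel m a b B C) (1 / (a + b))) ≤
        R := by
  have ha' : a ∈ Ioo 0 1 := ⟨ha, by linarith⟩
  have hb' : b ∈ Ioo 0 1 := ⟨hb, by linarith⟩
  have hβ : 1 ≤ 1 / (a + b) := one_le_one_div (add_pos ha hb) hab.le
  have hmix (D : Matrix n n ℂ) (hD : IsDensity D) :=
    homothety_maximallyMixed_mem_posDefDensities hD hl₀.le hl₁
  suffices hD : ∃ D ∈ {D : Matrix n n ℂ | IsDensity D}, ∀ W ∈ posDefSet (m × n),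
      u * tracePow (X * W) α - v * (l⁻¹ * tracePow
        (W * ampKernel m a b B (AffineMap.homothety (maximallyMixed n) l D)) (1 / (a + b))) ≤ R from
    hD.elim fun D hD => ⟨_, hmix D hD.1, hD.2⟩
  refine exists_forall_le_of_forall_exists_le isCompact_setOf_isDensity ⟨1, PosDef.one⟩
    (fun W hW => ?_) (fun W hW => ?_) (fun D hD => ?_) (fun D hD => ?_) fun W hW => ?_
  · exact continuousOn_const.sub (continuousOn_const.mul (continuousOn_const.mul
      (continuousOn_tracePow_mul_ampKernel_homothety hW hB a b _ hl₀.le hl₁)))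
  · exact (convexOn_const _ convex_setOf_isDensity).sub
      (((concaveOn_tracePow_mul_ampKernel_homothety hW hB ha' hb' hl₀.le hl₁).smul
        (inv_pos.mpr hl₀).le).smul hv)
  · simp only [tracePow_mul_comm X]
    exact (continuousOn_const.mul (continuousOn_tracePow_mul hX α)).sub (continuousOn_const.mul
      (continuousOn_const.mul
        (continuousOn_tracePow_mul (posDef_ampKernel a b hB (hmix D hD).1) _)))
  · simp only [tracePow_mul_comm X]
    exact ((concaveOn_tracePow_mul hX hα hα₁).smul hu).sub
      (((convexOn_tracePow_mul (posDef_ampKernel a b hB (hmix D hD).1) hβ).smul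
        (inv_pos.mpr hl₀).le).smul hv)
  · obtain ⟨C, hC, hle⟩ := h W hW
    refine ⟨C, ⟨hC.1.posSemidef, hC.2⟩, le_trans ?_ hle⟩
    have hG := mul_le_apply_homothety_of_concaveOn (concaveOn_tracePow_mul_ampKernel hW hB ha' hb')
      (maximallyMixed_mem_posDefDensities (n := n)).1
      (tracePow_mul_pos hW (posDef_ampKernel a b hB maximallyMixed_mem_posDefDensities.1) _).le
      hC.1 hl₀.le hl₁.le
    gcongr
    rwa [le_inv_mul_iff₀ hl₀]

end Minimax

section JointConvexity

open scoped MatrixOrder Pointwise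
open Set

variable {m n : Type*} [Fintype m] [DecidableEq m] [Fintype n] [DecidableEq n]
  {K A A₀ A₁ W : Matrix (m × n) (m × n) ℂ} {B B₀ B₁ C C₀ C₁ : Matrix n n ℂ}
  {p q r a b s α l x y R : ℝ}

/-- The functional `Tr (A^{p/2} K (1 ⊗ B^{q/2} Cʳ B^{q/2}) Kᴴ A^{p/2})ˢ` minimised in `Qinf`, with
the factors permuted cyclically. -/
noncomputable def ampTrace (K : Matrix (m × n) (m × n) ℂ) (p q r s : ℝ)
    (A : Matrix (m × n) (m × n) ℂ) (B C : Matrix n n ℂ) : ℝ :=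
  tracePow (Kᴴ * A ^ p * K * ampKernel m r q B C) s

theorem Qinf_eq_sInf_image_ampTrace (hK : IsUnit K) (p q r s : ℝ) (hA : A.PosDef)
    (hB : B.PosDef) : Qinf K p q r s A B = sInf (ampTrace K p q r s A B '' posDefDensities n) := by
  have hobj (C : Matrix n n ℂ) (hC : C.PosDef) : (trace (matPow (matPow A (p / 2) * K *
      ((1 : Matrix m m ℂ) ⊗ₖ (matPow B (q / 2) * matPow C r * matPow B (q / 2))) *
        Kᴴ * matPow A (p / 2)) s)).re = ampTrace K p q r s A B C := by
    have hsandwich := posDef_conjTranspose_mul_mul (posDef_ampKernel (m := m) r q hB hC)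
      ((posDef_rpow hA (p / 2)).isUnit.mul hK).star
    rw [star_eq_conjTranspose, conjTranspose_conjTranspose, conjTranspose_mul,
      (posDef_rpow hA _).isHermitian.eq, ← mul_assoc] at hsandwich
    have hhalves : A ^ p = A ^ (p / 2) * A ^ (p / 2) := by rw [rpow_mul_rpow hA, add_halves]
    rw [matPow_eq_rpow hA, matPow_eq_rpow hB, matPow_eq_rpow hC, ← oneKroneckerHom_apply,
      ← ampKernel, matPow_eq_rpow hsandwich, ← reTrace_apply, ← tracePow_eq_reTrace hsandwich,
      ampTrace, hhalves, tracePow_mul_comm, ← mul_assoc, tracePow_mul_comm]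
    simp only [mul_assoc]
  rw [Qinf]
  congr 1
  ext z
  constructor
  · rintro ⟨C, hC, htr, rfl⟩
    exact ⟨C, ⟨hC, htr⟩, (hobj C hC).symm⟩
  · rintro ⟨C, ⟨hC, htr⟩, rfl⟩
    exact ⟨C, hC, htr, (hobj C hC).symm⟩

theorem Qinf_of_isEmpty [IsEmpty (m × n)] (K : Matrix (m × n) (m × n) ℂ) (p q r s : ℝ)
    (A : Matrix (m × n) (m × n) ℂ) (B : Matrix n n ℂ) : Qinf K p q r s A B = 0 := by
  refine le_antisymm (Real.sInf_nonpos ?_) (Real.sInf_nonneg ?_) <;>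
  · rintro _ ⟨C, _, _, rfl⟩
    simp [trace]

theorem ampTrace_pos [Nonempty m] [Nonempty n] (hK : IsUnit K) (hA : A.PosDef) (hB : B.PosDef)
    (hC : C.PosDef) (p q r s : ℝ) : 0 < ampTrace K p q r s A B C :=
  tracePow_mul_pos (posDef_conjTranspose_mul_mul (posDef_rpow hA p) hK)
    (posDef_ampKernel r q hB hC) s

theorem ampTrace_neg_eq (K A : Matrix (m × n) (m × n) ℂ) (hB : B.PosDef) (hC : C.PosDef)
    (p a b s : ℝ) :
    ampTrace K p (-b) (-a) s A B C = tracePow (Kᴴ * A ^ p * K * (ampKernel m a b B C)⁻¹) s := by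
  rw [ampTrace, ampKernel_inv a b hB hC]

theorem exists_mem_posDefDensities_sub_le_ampTrace [Nonempty m] [Nonempty n] (hK : IsUnit K)
    (hp : p ∈ Icc 1 2) (ha : 0 < a) (hb : 0 < b) (hab : a + b < 1) (hs : 0 < s) (hα : 1 / p ≤ α)
    (hα₁ : α ≤ 1) (hexp : 1 / α = 1 / s + (a + b)) (hA₀ : A₀.PosDef) (hA₁ : A₁.PosDef)
    (hB₀ : B₀.PosDef) (hB₁ : B₁.PosDef) (hC₀ : C₀ ∈ posDefDensities n)
    (hC₁ : C₁ ∈ posDefDensities n) (hx : 0 ≤ x) (hy : 0 ≤ y) (hxy : x + y = 1) (hW : W.PosDef) :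
    ∃ C ∈ posDefDensities n,
      s / α * tracePow (Kᴴ * (x • A₀ + y • A₁) ^ p * K * W) α - s / (1 / (a + b)) *
          tracePow (W * ampKernel m a b (x • B₀ + y • B₁) C) (1 / (a + b)) ≤
        x * ampTrace K p (-b) (-a) s A₀ B₀ C₀ + y * ampTrace K p (-b) (-a) s A₁ B₁ C₁ := by
  have hα₀ : 0 < α := (one_div_pos.mpr (one_pos.trans_le hp.1)).trans_le hα
  have hab₀ : 0 < a + b := add_pos ha hb
  have hdual {A : Matrix (m × n) (m × n) ℂ} {B C : Matrix n n ℂ} (hA : A.PosDef) (hB : B.PosDef)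
      (hC : C ∈ posDefDensities n) :
      s / α * tracePow (Kᴴ * A ^ p * K * W) α - s / (1 / (a + b)) *
        tracePow (W * ampKernel m a b B C) (1 / (a + b)) ≤ ampTrace K p (-b) (-a) s A B C := by
    rw [ampTrace_neg_eq K A hB hC.1]
    exact sub_le_tracePow_mul_inv (posDef_conjTranspose_mul_mul (posDef_rpow hA p) hK)
      (posDef_ampKernel a b hB hC.1) hW hα₀ hs (one_le_one_div hab₀ hab.le)
      (by rwa [one_div_one_div])
  obtain ⟨C, hC, hconc⟩ := exists_mem_posDefDensities_le_tracePow_mul_ampKernel hW ha hb hab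
    hB₀ hB₁ hC₀ hC₁ hx hy hxy
  have hconv := (convexOn_tracePow_conjTranspose_mul_rpow_mul hK hW hp hα hα₁).2
    hA₀ hA₁ hx hy hxy
  refine ⟨C, hC, ?_⟩
  calc _ ≤ s / α * (x * tracePow (Kᴴ * A₀ ^ p * K * W) α + y * tracePow (Kᴴ * A₁ ^ p * K * W) α) -
        s / (1 / (a + b)) * (x * tracePow (W * ampKernel m a b B₀ C₀) (1 / (a + b)) +
          y * tracePow (W * ampKernel m a b B₁ C₁) (1 / (a + b))) := by gcongr; exact hconv
    _ ≤ _ := by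
      linarith [mul_le_mul_of_nonneg_left (hdual hA₀ hB₀ hC₀) hx,
        mul_le_mul_of_nonneg_left (hdual hA₁ hB₁ hC₁) hy]

theorem exists_mem_posDefDensities_rpow_mul_ampTrace_le [Nonempty m] [Nonempty n] (hK : IsUnit K)
    (hp : p ∈ Icc 1 2) (ha : 0 < a) (hb : 0 < b) (hab : a + b < 1) (hs : 0 < s) (hα : 1 / p ≤ α)
    (hα₁ : α ≤ 1) (hexp : 1 / α = 1 / s + (a + b)) (hA₀ : A₀.PosDef) (hA₁ : A₁.PosDef)
    (hB₀ : B₀.PosDef) (hB₁ : B₁.PosDef) (hC₀ : C₀ ∈ posDefDensities n)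
    (hC₁ : C₁ ∈ posDefDensities n) (hx : 0 ≤ x) (hy : 0 ≤ y) (hxy : x + y = 1) (hl : l ∈ Ioo 0 1) :
    ∃ C ∈ posDefDensities n, l ^ (s / (1 / (a + b))) *
        ampTrace K p (-b) (-a) s (x • A₀ + y • A₁) (x • B₀ + y • B₁) C ≤
      x * ampTrace K p (-b) (-a) s A₀ B₀ C₀ + y * ampTrace K p (-b) (-a) s A₁ B₁ C₁ := by
  have hα₀ : 0 < α := (one_div_pos.mpr (one_pos.trans_le hp.1)).trans_le hα
  have hβ₀ : 0 < 1 / (a + b) := one_div_pos.mpr (add_pos ha hb)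
  have hX := posDef_conjTranspose_mul_mul
    (posDef_rpow (convex_posDefSet _ hA₀ hA₁ hx hy hxy) p) hK
  have hB := convex_posDefSet _ hB₀ hB₁ hx hy hxy
  obtain ⟨C, hC, hle⟩ := exists_mem_posDefDensities_forall_sub_le hX hB ha hb hab hα₀ hα₁
    (div_pos hs hα₀).le (div_pos hs hβ₀).le hl.1 hl.2 fun W hW =>
      exists_mem_posDefDensities_sub_le_ampTrace hK hp ha hb hab hs hα hα₁ hexp hA₀ hA₁ hB₀ hB₁
        hC₀ hC₁ hx hy hxy hW
  refine ⟨C, hC, ?_⟩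
  rw [ampTrace_neg_eq K _ hB hC.1]
  exact rpow_mul_tracePow_mul_inv_le_of_forall_sub_le hX (posDef_ampKernel a b hB hC.1) hα₀.ne'
    hs.ne' hβ₀.ne' (by rwa [one_div_one_div]) hl.1 hle

theorem sInf_le_of_forall_rpow_mul_le {S : Set ℝ} (hS : ∀ z ∈ S, 0 ≤ z) {k : ℝ}
    (h : ∀ l ∈ Ioo (0 : ℝ) 1, ∃ z ∈ S, l ^ k * z ≤ R) : sInf S ≤ R := by
  have hle (l : ℝ) (hl : l ∈ Ioo 0 1) : l ^ k * sInf S ≤ R := by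
    obtain ⟨z, hz, hzR⟩ := h l hl
    exact (mul_le_mul_of_nonneg_left (csInf_le ⟨0, hS⟩ hz)
      (Real.rpow_nonneg hl.1.le k)).trans hzR
  have hlim : ContinuousAt (fun l : ℝ => l ^ k * sInf S) 1 :=
    (Real.continuousAt_rpow_const 1 k (Or.inl one_ne_zero)).mul continuousAt_const
  have hmem := Ioo_mem_nhdsLT (zero_lt_one (α := ℝ))
  simpa only [Real.one_rpow, one_mul] using
    le_of_tendsto (hlim.tendsto.mono_left nhdsWithin_le_nhds) (Filter.mem_of_superset hmem hle)

theorem Qinf_add_smul_le [Nonempty m] [Nonempty n] (hK : IsUnit K) (hp : p ∈ Icc 1 2)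
    (ha : 0 < a) (hb : 0 < b) (hab : a + b < 1) (hs : 0 < s) (hα : 1 / p ≤ α) (hα₁ : α ≤ 1)
    (hexp : 1 / α = 1 / s + (a + b)) (hA₀ : A₀.PosDef) (hA₁ : A₁.PosDef) (hB₀ : B₀.PosDef)
    (hB₁ : B₁.PosDef) (hx : 0 ≤ x) (hy : 0 ≤ y) (hxy : x + y = 1) :
    Qinf K p (-b) (-a) s (x • A₀ + y • A₁) (x • B₀ + y • B₁) ≤
      x * Qinf K p (-b) (-a) s A₀ B₀ + y * Qinf K p (-b) (-a) s A₁ B₁ := by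
  have hA := convex_posDefSet _ hA₀ hA₁ hx hy hxy
  have hB := convex_posDefSet _ hB₀ hB₁ hx hy hxy
  have hnonneg {A : Matrix (m × n) (m × n) ℂ} {B : Matrix n n ℂ} (hA : A.PosDef) (hB : B.PosDef) :
      ∀ z ∈ ampTrace K p (-b) (-a) s A B '' posDefDensities n, 0 ≤ z := by
    rintro _ ⟨C, hC, rfl⟩
    exact (ampTrace_pos hK hA hB hC.1 p (-b) (-a) s).le
  have hbdd {A : Matrix (m × n) (m × n) ℂ} {B : Matrix n n ℂ} {c : ℝ} (hA : A.PosDef)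
      (hB : B.PosDef) (hc : 0 ≤ c) :
      BddBelow (c • ampTrace K p (-b) (-a) s A B '' posDefDensities n) :=
    BddBelow.smul_of_nonneg ⟨0, hnonneg hA hB⟩ hc
  have hne {A : Matrix (m × n) (m × n) ℂ} {B : Matrix n n ℂ} :
      (ampTrace K p (-b) (-a) s A B '' posDefDensities n).Nonempty :=
    ⟨_, mem_image_of_mem _ maximallyMixed_mem_posDefDensities⟩
  rw [Qinf_eq_sInf_image_ampTrace hK _ _ _ _ hA hB, Qinf_eq_sInf_image_ampTrace hK _ _ _ _ hA₀ hB₀,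
    Qinf_eq_sInf_image_ampTrace hK _ _ _ _ hA₁ hB₁,
    ← smul_eq_mul, ← smul_eq_mul, ← Real.sInf_smul_of_nonneg hx, ← Real.sInf_smul_of_nonneg hy,
    ← csInf_add hne.smul_set (hbdd hA₀ hB₀ hx) hne.smul_set (hbdd hA₁ hB₁ hy)]
  refine le_csInf (hne.smul_set.add hne.smul_set) ?_
  rintro _ ⟨_, ⟨_, ⟨C₀, hC₀, rfl⟩, rfl⟩, _, ⟨_, ⟨C₁, hC₁, rfl⟩, rfl⟩, rfl⟩
  refine sInf_le_of_forall_rpow_mul_le (k := s / (1 / (a + b))) (hnonneg hA hB) fun l hl =>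
    exists_mem_image.mpr ?_
  exact exists_mem_posDefDensities_rpow_mul_ampTrace_le hK hp ha hb hab hs hα hα₁ hexp hA₀ hA₁
    hB₀ hB₁ hC₀ hC₁ hx hy hxy hl

end JointConvexity

/-- joint convexity of `(A,B) ↦ Q(A,B)` for
`1 ≤ p ≤ 2`, `−1 ≤ q,r < 0`, `1+q+r > 0`, `p+q+r > 0` and
`1/(p+q+r) ≤ s ≤ 1/(1+q+r)`. -/
theorem stmt2 {n₁ n₂ : Type*} [Fintype n₁] [DecidableEq n₁]
    [Fintype n₂] [DecidableEq n₂]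
    (K : Matrix (n₁ × n₂) (n₁ × n₂) ℂ) (hK : IsUnit K)
    (p q r s : ℝ) (hp0 : 1 ≤ p) (hp1 : p ≤ 2)
    (hq0 : -1 ≤ q) (hq1 : q < 0) (hr0 : -1 ≤ r) (hr1 : r < 0)
    (hqr : 0 < 1 + q + r) (hpqr : 0 < p + q + r)
    (hs1 : 1 / (p + q + r) ≤ s) (hs2 : s ≤ 1 / (1 + q + r))
    (A₀ A₁ : Matrix (n₁ × n₂) (n₁ × n₂) ℂ) (hA₀ : A₀.PosDef) (hA₁ : A₁.PosDef)
    (B₀ B₁ : Matrix n₂ n₂ ℂ) (hB₀ : B₀.PosDef) (hB₁ : B₁.PosDef)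
    (t : ℝ) (ht0 : 0 ≤ t) (ht1 : t ≤ 1) :
    Qinf K p q r s ((t : ℂ) • A₀ + ((1 - t : ℝ) : ℂ) • A₁)
        ((t : ℂ) • B₀ + ((1 - t : ℝ) : ℂ) • B₁) ≤
      t * Qinf K p q r s A₀ B₀ + (1 - t) * Qinf K p q r s A₁ B₁ := by
  rcases isEmpty_or_nonempty (n₁ × n₂) with _ | hne
  · simp only [Qinf_of_isEmpty, mul_zero, add_zero, le_refl]
  obtain ⟨_, _⟩ := nonempty_prod.mp hne
  have hs : 0 < s := (one_div_pos.mpr hpqr).trans_le hs1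
  have hs_le : 1 / s ≤ p + q + r := (one_div_le hpqr hs).mp hs1
  have le_hs : 1 + q + r ≤ 1 / s := (le_one_div hs hqr).mp hs2
  have hα : 0 < 1 / s + (-r + -q) := by linarith
  simp only [Complex.coe_smul]
  simpa only [neg_neg] using Qinf_add_smul_le (a := -r) (b := -q)
    (α := 1 / (1 / s + (-r + -q))) hK ⟨hp0, hp1⟩ (neg_pos.mpr hr1) (neg_pos.mpr hq1) (by linarith)
    hs (one_div_le_one_div_of_le hα (by linarith)) ((div_le_one hα).mpr (by linarith))
    (by rw [one_div_one_div]) hA₀ hA₁ hB₀ hB₁ ht0 (sub_nonneg.mpr ht1)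
    (add_sub_cancel t 1)
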